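/- Let d ≥ 3, and adopt the shell setup: Q_{4N} ⊆ D ⊆ Z^d, 16 ≤ n < n+m ≤ N with m ≤ n/8, L the loop erasure of simple random walk from 0 stopped at its first exit from D, α the initial segment of L up to its first hit of ∂_i Q_n with endpoint x₀, and A the box Q(x₀ + (m/2)e₁, m/4) (suitably rotated if x₀ is not on the face H_n). Let X̃ be simple random walk started at x₀ conditioned on the event { τ_D < T⁺_α }, and let G̃_D denote its Green function in D. Then there is a constant c = c(d) > 0 such that G̃_D(x₀, z) ≥ c m^{2-d} for every z ∈ A. -/

import Mathlib

open MeasureTheory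
open scoped ENNReal Classical

namespace USFPaper

/-- Vertices of the nearest-neighbour integer lattice `ℤ^d`. -/
abbrev V (d : ℕ) := Fin d → ℤ

variable {d : ℕ}

/-- Nearest-neighbour adjacency in `ℤ^d`. -/
def adj (x y : V d) : Prop := (∑ i, |x i - y i|) = 1

/-- The cube `Q(x,r) = { y : ‖x - y‖_∞ ≤ r }`. -/
def cube (x : V d) (r : ℕ) : Set (V d) := { y | ∀ i, |y i - x i| ≤ (r : ℤ) }

/-- Inner boundary `∂ᵢA` of a set `A`. -/
def innerBdry (A : Set (V d)) : Set (V d) := { x | x ∈ A ∧ ∃ y, adj x y ∧ y ∉ A }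

/-- Euclidean distance on `ℤ^d`. -/
noncomputable def eudist (x y : V d) : ℝ := Real.sqrt (∑ i, ((x i : ℝ) - (y i : ℝ)) ^ 2)

/-- The `k`-th coordinate unit vector. -/
def unitVec (k : ℕ) : V d := fun i => if (i : ℕ) = k then 1 else 0

/-- `μ` is the law of simple random walk on `ℤ^d` started at `x`, as a probability
measure on path space: every nearest-neighbour cylinder of length `n` starting at `x`
has probability `(2d)⁻ⁿ`. -/
def IsSRWLaw (μ : Measure (ℕ → V d)) (x : V d) : Prop :=
  IsProbabilityMeasure μ ∧
  ∀ (n : ℕ) (γ : ℕ → V d), γ 0 = x → (∀ i < n, adj (γ i) (γ (i + 1))) →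
    μ { ω | ∀ i ≤ n, ω i = γ i } = (2 * (d : ℝ≥0∞))⁻¹ ^ n

/-- First exit time `τ_A` from `A`, valued in `ℕ∞` (`⊤` if the path never leaves `A`). -/
noncomputable def exitTimeE (A : Set (V d)) (ω : ℕ → V d) : ENat :=
  if h : ∃ j, ω j ∉ A then (Nat.find h : ENat) else ⊤

/-- First hitting time `T_A` of `A`, valued in `ℕ∞`. -/
noncomputable def hitTimeE (A : Set (V d)) (ω : ℕ → V d) : ENat :=
  if h : ∃ j, ω j ∈ A then (Nat.find h : ENat) else ⊤

/-- First positive hitting time `T⁺_A` of `A`, valued in `ℕ∞`. -/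
noncomputable def hitTimePosE (A : Set (V d)) (ω : ℕ → V d) : ENat :=
  if h : ∃ j, 1 ≤ j ∧ ω j ∈ A then (Nat.find h : ENat) else ⊤

/-- First exit time from `A` as a natural number (junk value `0` if the path never exits). -/
noncomputable def exitTime (A : Set (V d)) (ω : ℕ → V d) : ℕ := (exitTimeE A ω).toNat

/-- Index of the first hit of `A` (junk value `0` if `A` is never hit). -/
noncomputable def hitIdx (A : Set (V d)) (γ : ℕ → V d) : ℕ := (hitTimeE A γ).toNat

/-- First index `≥ t` at which the path lies in `A` (junk value `t`). -/
noncomputable def hitIdxFrom (A : Set (V d)) (t : ℕ) (γ : ℕ → V d) : ℕ :=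
  if h : ∃ j, t ≤ j ∧ γ j ∈ A then Nat.find h else t

/-- The path frozen at its first exit from `D`. -/
noncomputable def stopAt (D : Set (V d)) (ω : ℕ → V d) : ℕ → V d :=
  fun j => if (j : ENat) ≤ exitTimeE D ω then ω j else ω (exitTime D ω)

/-- Time of the last visit of the path to the point `ω t`, at or after time `t`
(junk value if there are infinitely many such visits). -/
noncomputable def lastVisit (ω : ℕ → V d) (t : ℕ) : ℕ := sSup { j | t ≤ j ∧ ω j = ω t }

/-- The times of the chronological loop erasure (last-exit decomposition). -/
noncomputable def leTime (ω : ℕ → V d) : ℕ → ℕ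
  | 0 => lastVisit ω 0
  | k + 1 => lastVisit ω (leTime ω k + 1)

/-- Chronological loop erasure of an (infinite, transient) path. -/
noncomputable def infLoopErase (ω : ℕ → V d) : ℕ → V d := fun k => ω (leTime ω k)

/-- The loop erasure `L` of the walk stopped at its first exit from `D`. -/
noncomputable def lerw (D : Set (V d)) (ω : ℕ → V d) : ℕ → V d := infLoopErase (stopAt D ω)

/-- The event `T_A > τ_D`: the walk does not visit `A` at any time up to (and
including) its first exit from `D`; if it never exits `D`, it never visits `A`. -/
def avoidBeforeExit (D A : Set (V d)) (ω : ℕ → V d) : Prop :=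
  ∀ j : ℕ, (j : ENat) ≤ exitTimeE D ω → ω j ∉ A

/-- The event `T⁺_A > τ_D` (visits of `A` at positive times only). -/
def avoidBeforeExitPos (D A : Set (V d)) (ω : ℕ → V d) : Prop :=
  ∀ j : ℕ, 1 ≤ j → (j : ENat) ≤ exitTimeE D ω → ω j ∉ A

/-- The right-hand face (in the first coordinate direction) of the cube `Q(x₀,m)`. -/
def rightFace (x₀ : V d) (m : ℕ) : Set (V d) :=
  { y | y ∈ cube x₀ m ∧ ∀ i : Fin d, (i : ℕ) = 0 → y i = x₀ i + (m : ℤ) }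


/-- The unit vector pointing towards the face of the cube `Q(0,n)` on which `x₀`
lies (the first coordinate realising `|x₀ i| = n`; junk value `0` if there is none). -/
noncomputable def faceDir (x₀ : V d) (n : ℕ) : V d :=
  if h : ∃ i : Fin d, |x₀ i| = (n : ℤ) then
    fun j => if j = Classical.choose h then (if 0 ≤ x₀ (Classical.choose h) then 1 else -1) else 0
  else 0

/-- The point `x₁ = x₀ + (m/2) e₁` (with `e₁` replaced by the unit vector pointing
towards the face of `Q(0,n)` containing `x₀`). -/
noncomputable def x1pt (x₀ : V d) (n m : ℕ) : V d := x₀ + ((m / 2 : ℕ) : ℤ) • faceDir x₀ n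

/-- The box `A = Q(x₁, m/4)`. -/
noncomputable def boxA (x₀ : V d) (n m : ℕ) : Set (V d) := cube (x1pt x₀ n m) (m / 4)

/-- A second unit direction, orthogonal to `faceDir x₀ n`, reflected according to the
sign of the corresponding coordinate of `x₀` (junk value `0` in degenerate cases). -/
noncomputable def sideDir (x₀ : V d) (n : ℕ) : V d :=
  if h : ∃ i : Fin d, |x₀ i| = (n : ℤ) then
    (if h2 : ∃ j : Fin d, j ≠ Classical.choose h then
      fun t => if t = Classical.choose h2 then (if x₀ (Classical.choose h2) ≤ 0 then 1 else -1) else 0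
    else 0)
  else 0

/-- The point `x₂ = x₁ + m e₂` (suitably rotated/reflected). -/
noncomputable def x2pt (x₀ : V d) (n m : ℕ) : V d := x1pt x₀ n m + (m : ℤ) • sideDir x₀ n

/-- `α`: the initial segment of the loop erasure `L = lerw D ω` up to its first hit
of `∂ᵢ Q(0,n)`, as a list. -/
noncomputable def alphaList (D : Set (V d)) (n : ℕ) (ω : ℕ → V d) : List (V d) :=
  (List.range (hitIdx (innerBdry (cube 0 n)) (lerw D ω) + 1)).map (lerw D ω)

/-- The endpoint `x₀` of a finite path (junk value `0` for the empty path). -/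
def endPt (a : List (V d)) : V d := (a.getLast?).getD 0

/-- `β`: the segment of the loop erasure `L = lerw D ω` from its first hit `x₀` of
`∂ᵢ Q(0,n)` up to its first subsequent hit of `∂ᵢ Q(x₀,m)`, as a list. -/
noncomputable def betaList (D : Set (V d)) (n m : ℕ) (ω : ℕ → V d) : List (V d) :=
  let γ := lerw D ω
  let k₁ := hitIdx (innerBdry (cube 0 n)) γ
  let k₂ := hitIdxFrom (innerBdry (cube (γ k₁) m)) k₁ γ
  (List.range (k₂ - k₁ + 1)).map fun i => γ (k₁ + i)

/-- `H_A(γ)`: the number of points of the path `γ` lying in the set `A`. -/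
noncomputable def hitCount (A : Set (V d)) (l : List (V d)) : ℕ :=
  (l.map fun v => if v ∈ A then 1 else 0).sum

/-- The number of visits of the path to `z` strictly before its first exit from `D`
(as an extended nonnegative real). -/
noncomputable def visitsBeforeExit (D : Set (V d)) (z : V d) (ω : ℕ → V d) : ℝ≥0∞ :=
  ∑' j : ℕ, if (j : ENat) < exitTimeE D ω ∧ ω j = z then 1 else 0

/-! ### Discrete potential theory basics -/

/-- unit steps -/
def stp (p : Fin d × Bool) : V d := if p.2 then Pi.single p.1 1 else -Pi.single p.1 1

/-- nearest neighbour average -/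
noncomputable def PP (f : V d → ℝ) (x : V d) : ℝ := (∑ p : Fin d × Bool, f (x + stp p)) / (2 * (d : ℝ))

lemma PP_eq (f : V d → ℝ) (x : V d) :
    PP f x = (∑ i : Fin d, (f (x + Pi.single i 1) + f (x - Pi.single i 1))) / (2 * (d : ℝ)) := by
  unfold PP
  rw [Fintype.sum_prod_type]
  simp [stp, sub_eq_add_neg]

lemma PP_mono {f g : V d → ℝ} {x : V d} (h : ∀ p, f (x + stp p) ≤ g (x + stp p)) : PP f x ≤ PP g x := by
  unfold PP
  gcongr
  exact h _

lemma PP_const (hd : 0 < d) (c : ℝ) (x : V d) : PP (fun _ => c) x = c := by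
  unfold PP
  have : (0:ℝ) < d := by exact_mod_cast hd
  simp [Finset.sum_const, Finset.card_univ]
  field_simp

lemma PP_add (f g : V d → ℝ) (x : V d) : PP (fun y => f y + g y) x = PP f x + PP g x := by
  unfold PP
  rw [Finset.sum_add_distrib, add_div]

lemma PP_smul (c : ℝ) (f : V d → ℝ) (x : V d) : PP (fun y => c * f y) x = c * PP f x := by
  unfold PP
  rw [← Finset.mul_sum, mul_div_assoc]

lemma PP_sub (f g : V d → ℝ) (x : V d) : PP (fun y => f y - g y) x = PP f x - PP g x := by
  unfold PP
  rw [Finset.sum_sub_distrib, sub_div]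

lemma PP_nonneg {f : V d → ℝ} {x : V d} (h : ∀ p, 0 ≤ f (x + stp p)) : 0 ≤ PP f x := by
  unfold PP
  have := Finset.sum_nonneg (s := Finset.univ) (fun p _ => h p)
  positivity

lemma PP_ge_single (hd : 0 < d) {f : V d → ℝ} {x : V d} (h : ∀ p, 0 ≤ f (x + stp p)) (p : Fin d × Bool) :
    f (x + stp p) ≤ 2 * d * PP f x := by
  unfold PP
  have h1 : f (x + stp p) ≤ ∑ p, f (x + stp p) :=
    Finset.single_le_sum (f := fun p => f (x + stp p)) (fun p _ => h p) (Finset.mem_univ p)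
  have : (0:ℝ) < d := by exact_mod_cast hd
  rw [mul_div_cancel₀ _ (by positivity)]
  exact h1

lemma PP_le_const (hd : 0 < d) {f : V d → ℝ} {x : V d} {c : ℝ} (h : ∀ p, f (x + stp p) ≤ c) : PP f x ≤ c := by
  rw [← PP_const hd c x]
  exact PP_mono h

lemma stp_apply_abs (p : Fin d × Bool) (i : Fin d) : |stp p i| ≤ 1 := by
  unfold stp
  by_cases h : i = p.1
  · subst h; split <;> simp
  · split <;> simp [Pi.single_apply, h]

lemma cube_finite (x : V d) (r : ℕ) : (cube x r).Finite := by
  have : cube x r ⊆ Set.Icc (fun i => x i - r) (fun i => x i + r) := by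
    intro y hy
    refine ⟨fun i => ?_, fun i => ?_⟩ <;> have := abs_le.1 (hy i) <;> simp only <;> linarith
  exact (Set.finite_Icc _ _).subset this

lemma cube_step {x y : V d} {r s : ℕ} (hy : y ∈ cube x r) (h : r + 1 ≤ s) (p : Fin d × Bool) :
    y + stp p ∈ cube x s := by
  intro i
  have h1 := hy i
  have h2 := stp_apply_abs p i
  simp only [Pi.add_apply]
  rw [abs_le] at *
  constructor <;> omega

lemma cube_mono {x : V d} {r s : ℕ} (h : r ≤ s) : cube x r ⊆ cube x s := by
  intro y hy i
  have := hy i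
  omega

lemma cube_trans {x y z : V d} {r s t : ℕ} (hy : y ∈ cube x r) (hz : z ∈ cube y s) (h : r + s ≤ t) :
    z ∈ cube x t := by
  intro i
  have h1 := hy i
  have h2 := hz i
  rw [abs_le] at *
  constructor <;> omega

lemma cube_symm {x y : V d} {r : ℕ} (hy : y ∈ cube x r) : x ∈ cube y r := by
  intro i
  have h1 := hy i
  rw [abs_sub_comm]; exact h1

lemma mem_cube_self (x : V d) (r : ℕ) : x ∈ cube x r := by
  intro i; simp

/-- minimum principle -/
lemma min_principle (hd : 0 < d) {Ω : Set (V d)} (hfin : Ω.Finite) {G : V d → ℝ}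
    (h1 : ∀ x ∈ Ω, PP G x ≤ G x)
    (h2 : ∀ x ∈ Ω, G x < 0 → ∀ p, x + stp p ∉ Ω → 0 ≤ G (x + stp p)) :
    ∀ x ∈ Ω, 0 ≤ G x := by
  by_contra hcon
  push Not at hcon
  obtain ⟨x0, hx0, hneg⟩ := hcon
  obtain ⟨x1, hx1, hmin⟩ := Set.exists_min_image Ω G hfin ⟨x0, hx0⟩
  obtain ⟨x2, ⟨hx2, hx2e⟩, hmax⟩ := Set.exists_max_image {x | x ∈ Ω ∧ G x = G x1} (fun x => x ⟨0, hd⟩)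
    (hfin.subset (fun x h => h.1)) ⟨x1, hx1, rfl⟩
  have hx1n : G x1 < 0 := (hmin x0 hx0).trans_lt hneg
  have hge : ∀ p, G x2 ≤ G (x2 + stp p) := by
    intro p
    by_cases hp : x2 + stp p ∈ Ω
    · rw [hx2e]; exact hmin _ hp
    · have := h2 x2 hx2 (by rw [hx2e]; exact hx1n) p hp
      linarith
  have hgt : G x2 < G (x2 + stp (⟨0, hd⟩, true)) := by
    by_cases hp : x2 + stp (⟨0, hd⟩, true) ∈ Ω
    · refine lt_of_le_of_ne (hge _) (fun he => ?_)
      have := hmax _ ⟨hp, by rw [← he, hx2e]⟩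
      simp [stp] at this
    · have := h2 x2 hx2 (by rw [hx2e]; exact hx1n) _ hp
      linarith
  have h3 := h1 x2 hx2
  unfold PP at h3
  have hdr : (0:ℝ) < d := by exact_mod_cast hd
  rw [div_le_iff₀ (by positivity)] at h3
  have h4 : ∑ _p : Fin d × Bool, G x2 < ∑ p : Fin d × Bool, G (x2 + stp p) :=
    Finset.sum_lt_sum (fun p _ => hge p) ⟨_, Finset.mem_univ _, hgt⟩
  simp [Finset.sum_const, Finset.card_univ] at h4
  linarith

/-- squared Euclidean norm -/
def nsq (x : V d) : ℝ := ∑ i, (x i : ℝ) ^ 2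

lemma nsq_nonneg (x : V d) : 0 ≤ nsq x := Finset.sum_nonneg (fun i _ => sq_nonneg _)

lemma sq_le_nsq (x : V d) (i : Fin d) : (x i : ℝ) ^ 2 ≤ nsq x :=
  Finset.single_le_sum (f := fun i => (x i : ℝ) ^ 2) (fun i _ => sq_nonneg _) (Finset.mem_univ i)

lemma nsq_add_single (x : V d) (i : Fin d) : nsq (x + Pi.single i 1) = nsq x + (1 + 2 * x i) := by
  unfold nsq
  rw [← sub_eq_iff_eq_add', ← Finset.sum_sub_distrib, Finset.sum_eq_single i]
  · simp; ring
  · intro j _ hj; simp [Pi.single_apply, hj]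
  · simp

lemma nsq_sub_single (x : V d) (i : Fin d) : nsq (x - Pi.single i 1) = nsq x + (1 - 2 * x i) := by
  unfold nsq
  rw [← sub_eq_iff_eq_add', ← Finset.sum_sub_distrib, Finset.sum_eq_single i]
  · simp; ring
  · intro j _ hj; simp [Pi.single_apply, hj]
  · simp

lemma nsq_le_of_cube {x w : V d} {r : ℕ} (h : x ∈ cube w r) : nsq (x - w) ≤ d * (r:ℝ) ^ 2 := by
  unfold nsq
  calc ∑ i, (((x - w) i : ℤ) : ℝ) ^ 2 ≤ ∑ _i : Fin d, (r:ℝ) ^ 2 := by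
        refine Finset.sum_le_sum (fun i _ => ?_)
        have := h i
        rw [← sq_abs]
        have h2 : |(((x - w) i : ℤ) : ℝ)| ≤ r := by exact_mod_cast this
        gcongr
    _ = _ := by simp

lemma nsq_ge_of_not_cube {x w : V d} {r : ℕ} (h : x ∉ cube w r) : (r:ℝ) ^ 2 ≤ nsq (x - w) := by
  simp only [cube, Set.mem_ofPred_eq, not_forall, not_le] at h
  obtain ⟨i, hi⟩ := h
  refine le_trans ?_ (sq_le_nsq (x - w) i)
  rw [← sq_abs (((x - w) i : ℤ) : ℝ)]
  have h2 : (r:ℝ) ≤ |(((x - w) i : ℤ) : ℝ)| := by exact_mod_cast hi.le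
  gcongr

lemma exp_add_exp_neg_ge (y : ℝ) : 2 + y ^ 2 ≤ Real.exp y + Real.exp (-y) := by
  have key : ∀ y : ℝ, 0 ≤ y → 2 + y ^ 2 ≤ Real.exp y + Real.exp (-y) := by
    intro y hy
    have h1 := Real.self_le_sinh_iff.2 (show (0:ℝ) ≤ y / 2 by linarith)
    rw [Real.sinh_eq] at h1
    have e1 : Real.exp y = Real.exp (y/2) * Real.exp (y/2) := by rw [← Real.exp_add]; ring_nf
    have e2 : Real.exp (-y) = Real.exp (-(y/2)) * Real.exp (-(y/2)) := by rw [← Real.exp_add]; ring_nf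
    have e3 : Real.exp (y/2) * Real.exp (-(y/2)) = 1 := by rw [← Real.exp_add]; simp
    rw [e1, e2]
    nlinarith
  rcases le_total 0 y with h | h
  · exact key y h
  · have := key (-y) (by linarith)
    simp at this
    linarith

/-- Gaussian barrier -/
noncomputable def gau (l : ℝ) (w x : V d) : ℝ := Real.exp (-l * nsq (x - w))

lemma gau_PP (hd : 0 < d) (l : ℝ) (w x : V d) :
    gau l w x * (Real.exp (-l) * (1 + 2 * l ^ 2 * nsq (x - w) / d)) ≤ PP (gau l w) x := by
  have hdr : (0:ℝ) < d := by exact_mod_cast hd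
  rw [PP_eq, le_div_iff₀ (by positivity)]
  have hterm : ∀ i : Fin d, gau l w x * Real.exp (-l) * (2 + (2 * l * ((x - w) i : ℤ)) ^ 2) ≤
      gau l w (x + Pi.single i 1) + gau l w (x - Pi.single i 1) := by
    intro i
    have a1 : gau l w (x + Pi.single i 1) = gau l w x * Real.exp (-l) * Real.exp (-(2 * l * ((x - w) i : ℤ))) := by
      unfold gau
      rw [show x + Pi.single i 1 - w = (x - w) + Pi.single i 1 by abel, nsq_add_single, ← Real.exp_add, ← Real.exp_add]
      ring_nf
    have a2 : gau l w (x - Pi.single i 1) = gau l w x * Real.exp (-l) * Real.exp ((2 * l * ((x - w) i : ℤ))) := by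
      unfold gau
      rw [show x - Pi.single i 1 - w = (x - w) - Pi.single i 1 by abel, nsq_sub_single, ← Real.exp_add, ← Real.exp_add]
      ring_nf
    rw [a1, a2, ← mul_add]
    have := exp_add_exp_neg_ge (2 * l * ((x - w) i : ℤ))
    have hp : 0 ≤ gau l w x * Real.exp (-l) := by unfold gau; positivity
    apply mul_le_mul_of_nonneg_left _ hp
    linarith
  refine le_trans (le_of_eq ?_) (Finset.sum_le_sum (fun i _ => hterm i))
  rw [← Finset.mul_sum, Finset.sum_add_distrib]
  simp only [mul_pow]
  rw [← Finset.mul_sum]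
  change _ = _ * (_ + _ * nsq (x - w))
  simp
  field_simp

lemma gau_pos (l : ℝ) (w x : V d) : 0 < gau l w x := by unfold gau; positivity

lemma gau_le_one {l : ℝ} (hl : 0 ≤ l) (w x : V d) : gau l w x ≤ 1 := by
  unfold gau
  rw [Real.exp_le_one_iff]
  nlinarith [nsq_nonneg (x - w)]

lemma gau_sub (hd : 0 < d) {l : ℝ} (hl : 0 ≤ l) (w x : V d) :
    gau l w x ≤ PP (gau l w) x + l := by
  have h := gau_PP hd l w x
  have h1 := gau_le_one hl w x
  have h0 := gau_pos l w x
  have h2 : 1 - l ≤ Real.exp (-l) := by have := Real.add_one_le_exp (-l); linarith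
  have h3 : 0 ≤ 2 * l ^ 2 * nsq (x - w) / d := by have := nsq_nonneg (x - w); positivity
  have h4 : 1 - l ≤ Real.exp (-l) * (1 + 2 * l ^ 2 * nsq (x - w) / d) := by
    have := Real.exp_pos (-l)
    nlinarith
  nlinarith

lemma gau_subharm (hd : 0 < d) {r : ℝ} (hr : 2 * d ≤ r ^ 2) (w x : V d) (hx : r ^ 2 ≤ nsq (x - w)) :
    gau (d / r ^ 2) w x ≤ PP (gau (d / r ^ 2) w) x := by
  have hdr : (0:ℝ) < d := by exact_mod_cast hd
  refine le_trans ?_ (gau_PP hd _ w x)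
  have hr0 : 0 < r ^ 2 := by linarith
  set l := (d:ℝ) / r ^ 2 with hl
  have hlp : 0 < l := by positivity
  have hl2 : l ≤ 1 / 2 := by rw [hl, div_le_iff₀ hr0]; linarith
  have h2 : 1 - l ≤ Real.exp (-l) := by have := Real.add_one_le_exp (-l); linarith
  have h3 : 2 * l ≤ 2 * l ^ 2 * nsq (x - w) / d := by
    rw [le_div_iff₀ hdr]
    have : (d:ℝ) = l * r ^ 2 := by rw [hl, div_mul_cancel₀ _ hr0.ne']
    calc 2 * l * d = 2 * l ^ 2 * r ^ 2 := by rw [this]; ring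
      _ ≤ _ := by gcongr
  have h4 : 1 ≤ Real.exp (-l) * (1 + 2 * l ^ 2 * nsq (x - w) / d) := by
    have h5 : (1 - l) * (1 + 2 * l) ≤ Real.exp (-l) * (1 + 2 * l ^ 2 * nsq (x - w) / d) := by
      gcongr
    nlinarith
  have h0 := gau_pos l w x
  nlinarith

/-- reflection in a coordinate hyperplane -/
def refl' (i : Fin d) (h : ℤ) (x : V d) : V d := Function.update x i (h - x i)

lemma refl'_same (i : Fin d) (h : ℤ) (x : V d) : refl' i h x i = h - x i := by simp [refl']

lemma refl'_ne {i j : Fin d} (hj : j ≠ i) (h : ℤ) (x : V d) : refl' i h x j = x j := by simp [refl', hj]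

lemma refl'_refl' (i : Fin d) (h : ℤ) (x : V d) : refl' i h (refl' i h x) = x := by
  simp [refl']

def flipP (i : Fin d) (p : Fin d × Bool) : Fin d × Bool := (p.1, if p.1 = i then !p.2 else p.2)

lemma flipP_inv (i : Fin d) : Function.Involutive (flipP i) := by
  rintro ⟨j, b⟩
  by_cases h : j = i <;> simp [flipP, h]

lemma refl'_stp (i : Fin d) (h : ℤ) (x : V d) (p : Fin d × Bool) :
    refl' i h (x + stp p) = refl' i h x + stp (flipP i p) := by
  obtain ⟨j, b⟩ := p
  funext k
  by_cases hk : k = i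
  · subst hk
    by_cases hj : j = k
    · subst hj
      cases b <;> simp [refl', stp, flipP] <;> ring
    · have : k ≠ j := fun h => hj h.symm
      cases b <;> simp [refl', stp, flipP, hj, this]
  · by_cases hj : j = i
    · subst hj
      cases b <;> simp [refl', stp, flipP, hk]
    · cases b <;> simp [refl', stp, flipP, hk, hj]

lemma PP_refl' (i : Fin d) (h : ℤ) (u : V d → ℝ) (x : V d) :
    PP (fun y => u (refl' i h y)) x = PP u (refl' i h x) := by
  unfold PP
  congr 1
  rw [← Equiv.sum_comp (flipP_inv i).toPerm]
  refine Finset.sum_congr rfl (fun p _ => ?_)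
  show u (refl' i h (x + stp (flipP i p))) = _
  rw [refl'_stp, flipP_inv i p]

lemma PP_coord (hd : 0 < d) (i : Fin d) (x : V d) : PP (fun y => (y i : ℝ)) x = x i := by
  have hdr : (0:ℝ) < d := by exact_mod_cast hd
  rw [PP_eq, div_eq_iff (by positivity)]
  have : ∀ j : Fin d, (((x + Pi.single j 1 : V d) i : ℤ) : ℝ) + (((x - Pi.single j 1 : V d) i : ℤ) : ℝ) = 2 * x i := by
    intro j; simp; ring
  rw [Finset.sum_congr rfl (fun j _ => this j)]
  simp; ring

lemma PP_coord_sq (hd : 0 < d) (i : Fin d) (x : V d) : PP (fun y => (y i : ℝ) ^ 2) x = (x i : ℝ) ^ 2 + 1 / d := by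
  have hdr : (0:ℝ) < d := by exact_mod_cast hd
  rw [PP_eq, div_eq_iff (by positivity)]
  have : ∀ j : Fin d, (((x + Pi.single j 1 : V d) i : ℤ) : ℝ) ^ 2 + (((x - Pi.single j 1 : V d) i : ℤ) : ℝ) ^ 2
      = 2 * (x i : ℝ) ^ 2 + if i = j then 2 else 0 := by
    intro j
    by_cases h : i = j
    · subst h; simp; ring
    · simp [h]; ring
  rw [Finset.sum_congr rfl (fun j _ => this j), Finset.sum_add_distrib]
  simp
  field_simp

lemma PP_nsq (hd : 0 < d) (y x : V d) : PP (fun z => nsq (z - y)) x = nsq (x - y) + 1 := by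
  have hdr : (0:ℝ) < d := by exact_mod_cast hd
  rw [PP_eq, div_eq_iff (by positivity)]
  have : ∀ j : Fin d, nsq (x + Pi.single j 1 - y) + nsq (x - Pi.single j 1 - y) = 2 * nsq (x - y) + 2 := by
    intro j
    rw [show x + Pi.single j 1 - y = (x - y) + Pi.single j 1 by abel,
      show x - Pi.single j 1 - y = (x - y) - Pi.single j 1 by abel, nsq_add_single, nsq_sub_single]
    ring
  rw [Finset.sum_congr rfl (fun j _ => this j)]
  simp; ring

/-- barrier for the gradient estimate (times `S^2`) -/
def gbar (i : Fin d) (y : V d) (S : ℕ) (x : V d) : ℝ :=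
  2 * d * S * ((x i : ℝ) - y i) - d * S - d * ((x i : ℝ) - y i) ^ 2 + (d - 1) * ((x i : ℝ) - y i) + nsq (x - y) + d

lemma gbar_harm (hd : 0 < d) (i : Fin d) (y : V d) (S : ℕ) (x : V d) : PP (gbar i y S) x = gbar i y S x := by
  have hdr : (0:ℝ) < d := by exact_mod_cast hd
  have e : gbar i y S = fun x => (((2 * d * S + (d - 1) + 2 * d * y i) * (x i : ℝ) + (-d) * (x i : ℝ) ^ 2) + nsq (x - y))
     + (- 2 * d * S * y i - d * S - d * (y i : ℝ) ^ 2 - (d - 1) * y i + d) := by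
    funext x; unfold gbar; ring
  rw [e, PP_add, PP_add, PP_add, PP_smul, PP_smul, PP_coord hd, PP_coord_sq hd, PP_nsq hd, PP_const hd]
  field_simp
  ring

lemma nsq_split_ge {x : V d} {i j : Fin d} (h : j ≠ i) : (x i : ℝ) ^ 2 + (x j : ℝ) ^ 2 ≤ nsq x := by
  unfold nsq
  rw [← Finset.sum_pair h.symm (f := fun k => (x k : ℝ) ^ 2)]
  exact Finset.sum_le_sum_of_subset_of_nonneg (Finset.subset_univ _) (fun _ _ _ => sq_nonneg _)

lemma grad (hd : 0 < d) {u : V d → ℝ} {y : V d} {S : ℕ} (hS : 1 ≤ S) {M : ℝ}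
    (hh : ∀ x ∈ cube y S, u x = PP u x) (hb : ∀ x ∈ cube y (S + 1), 0 ≤ u x ∧ u x ≤ M) (i : Fin d) :
    u (y + Pi.single i 1) - u y ≤ 2 * d * M / S := by
  have hdr : (1:ℝ) ≤ d := by exact_mod_cast hd
  have hSr : (1:ℝ) ≤ S := by exact_mod_cast hS
  have hM : 0 ≤ M := (hb y (mem_cube_self _ _)).1.trans (hb y (mem_cube_self _ _)).2
  set R := refl' i (2 * y i + 1) with hR
  set Ω : Set (V d) := {x | y i + 1 ≤ x i ∧ x i ≤ y i + S ∧ ∀ j, j ≠ i → |x j - y j| ≤ (S:ℤ) - 1} with hΩ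
  have hΩc : Ω ⊆ cube y S := by
    rintro x ⟨h1, h2, h3⟩ j
    by_cases hj : j = i
    · subst hj; rw [abs_le]; constructor <;> omega
    · have := h3 j hj; omega
  have hRc : ∀ x ∈ Ω, R x ∈ cube y S := by
    rintro x ⟨h1, h2, h3⟩ j
    by_cases hj : j = i
    · subst hj; rw [hR, refl'_same, abs_le]; constructor <;> omega
    · rw [hR, refl'_ne hj]; have := h3 j hj; omega
  set G : V d → ℝ := fun x => M * (gbar i y S x / S ^ 2) - (u x - u (R x)) with hG
  have hGe : G = fun x => (M / S ^ 2) * gbar i y S x - (u x - u (R x)) := by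
    funext x; rw [hG]; ring
  have key : ∀ x ∈ Ω, 0 ≤ G x := by
    refine min_principle hd ((cube_finite y S).subset hΩc) ?_ ?_
    · intro x hx
      have : PP G x = G x := by
        rw [hGe, PP_sub, PP_smul, PP_sub, hR, PP_refl', gbar_harm hd, ← hh x (hΩc hx), ← hR, ← hh (R x) (hRc x hx)]
      exact this.le
    · intro x hx hneg p hp
      have hcase : (x + stp p) i = y i ∨ ((x + stp p) i = y i + S + 1) ∨
          (1 ≤ (x + stp p) i - y i ∧ (x + stp p) i - y i ≤ S ∧ ∃ j, j ≠ i ∧ |(x + stp p) j - y j| = S) := by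
        by_contra hcon
        push Not at hcon
        obtain ⟨c1, c2, c3⟩ := hcon
        apply hp
        obtain ⟨h1, h2, h3⟩ := hx
        have h4 := abs_le.1 (stp_apply_abs p i)
        have h5 : 1 ≤ (x + stp p) i - y i ∧ (x + stp p) i - y i ≤ S := by
          simp only [Pi.add_apply] at *
          omega
        refine ⟨by linarith, by linarith, fun j hj => ?_⟩
        have h6 := c3 h5.1 h5.2 j hj
        have h7 := h3 j hj
        have h8 := stp_apply_abs p j
        simp only [Pi.add_apply] at *
        rw [abs_le] at h7 h8
        have : |x j + stp p j - y j| ≤ S := by rw [abs_le]; omega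
        omega
      have hx'c : x + stp p ∈ cube y (S + 1) := cube_step (hΩc hx) le_rfl p
      have hRx'c : R (x + stp p) ∈ cube y (S + 1) := by
        rw [hR, refl'_stp]; exact cube_step (hRc x hx) le_rfl _
      have b1 := hb _ hx'c
      have b2 := hb _ hRx'c
      rcases hcase with h | h | h
      · -- crossing
        have hpi : p = (i, false) ∧ x i = y i + 1 := by
          obtain ⟨h1, h2, h3⟩ := hx
          obtain ⟨j, b⟩ := p
          by_cases hj : i = j
          · subst hj
            cases b
            · simp [stp] at h; exact ⟨rfl, by omega⟩
            · simp [stp] at h; omega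
          · cases b <;> simp [stp, hj] at h <;> omega
        obtain ⟨rfl, hxi⟩ := hpi
        have e1 : R x = x + stp (i, false) := by
          funext k
          by_cases hk : k = i
          · subst hk; simp [hR, refl', stp]; omega
          · simp [hR, refl', stp, hk]
        have e2 : R (x + stp (i, false)) = x := by rw [← e1, hR, refl'_refl']
        have hGx : G x = M * (gbar i y S x / S ^ 2) - (u x - u (x + stp (i, false))) := by
          rw [hG]; simp only [e1]
        have hGx' : G (x + stp (i, false)) = M * (gbar i y S (x + stp (i, false)) / S ^ 2) - (u (x + stp (i, false)) - u x) := by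
          rw [hG]; simp only [e2]
        have hsum : 0 ≤ gbar i y S x + gbar i y S (x + stp (i, false)) := by
          have hxr : (x i : ℝ) = y i + 1 := by exact_mod_cast hxi
          unfold gbar
          have e3 : (x + stp (i, false) - y) = (x - y) - Pi.single i 1 := by simp [stp]; abel
          have e4 : (((x + stp (i, false)) i : ℤ) : ℝ) = y i := by exact_mod_cast h
          rw [e3, nsq_sub_single, e4, hxr]
          have h5 := sq_le_nsq (x - y) i
          have e5 : (((x - y) i : ℤ) : ℝ) = 1 := by simp [hxr]
          rw [e5] at *
          nlinarith
        have : 0 ≤ M * ((gbar i y S x + gbar i y S (x + stp (i, false))) / S ^ 2) := by positivity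
        rw [add_div, mul_add] at this
        linarith
      all_goals
        have hge : (S:ℝ) ^ 2 ≤ gbar i y S (x + stp p) := by
          set x' := x + stp p
          unfold gbar
          first
          | (have h' : (x' i : ℝ) - y i = S + 1 := by
              rw [h]; push_cast; ring
             have h5 := sq_le_nsq (x' - y) i
             have e5 : (((x' - y) i : ℤ) : ℝ) = S + 1 := by simp [h']
             rw [e5] at h5
             rw [h']
             nlinarith)
          | (obtain ⟨h1, h2, j, hj, h3⟩ := h
             have h5 := nsq_split_ge (x := x' - y) hj
             have e5 : (((x' - y) i : ℤ) : ℝ) = (x' i : ℝ) - y i := by simp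
             have e6 : (((x' - y) j : ℤ) : ℝ) ^ 2 = (S:ℝ) ^ 2 := by
               rw [← sq_abs]; congr 1; exact_mod_cast h3
             rw [e5, e6] at h5
             have h1r : (1:ℝ) ≤ (x' i : ℝ) - y i := by exact_mod_cast h1
             have h2r : (x' i : ℝ) - y i ≤ S := by exact_mod_cast h2
             set a := (x' i : ℝ) - y i
             have k1 : 0 ≤ (d:ℝ) * ((S - a) * a) := by
               apply mul_nonneg (by linarith); apply mul_nonneg <;> linarith
             have k2 : 0 ≤ (d:ℝ) * (S * (a - 1)) := by
               apply mul_nonneg (by linarith); apply mul_nonneg <;> linarith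
             nlinarith)
        have h1 : 1 ≤ gbar i y S (x + stp p) / S ^ 2 := by
          rw [le_div_iff₀ (by positivity)]; linarith
        have : M ≤ M * (gbar i y S (x + stp p) / S ^ 2) := le_mul_of_one_le_right hM h1
        simp only [hG]
        linarith
  have hyΩ : y + Pi.single i 1 ∈ Ω := by
    refine ⟨by simp, by simp; omega, fun j hj => by simp [hj]; omega⟩
  have h := key _ hyΩ
  have e1 : R (y + Pi.single i 1) = y := by
    funext k
    by_cases hk : k = i
    · subst hk; simp [hR, refl']; omega
    · simp [hR, refl', hk]
  simp only [hG, e1] at h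
  have e2 : gbar i y S (y + Pi.single i 1) = d * S + d := by
    unfold gbar
    have : nsq (y + Pi.single i 1 - y) = 1 := by
      rw [show y + Pi.single i 1 - y = 0 + Pi.single i 1 by abel, nsq_add_single]; simp [nsq]
    rw [this]; simp; ring
  rw [e2] at h
  have h9 : M * ((d * S + d) / S ^ 2) ≤ 2 * d * M / S := by
    have : ((d:ℝ) * S + d) / S ^ 2 ≤ 2 * d / S := by
      rw [div_le_div_iff₀ (by positivity) (by positivity)]
      nlinarith [mul_nonneg (mul_nonneg (show (0:ℝ) ≤ d by linarith) (show (0:ℝ) ≤ S by linarith)) (show (0:ℝ) ≤ S - 1 by linarith)]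
    calc _ ≤ M * (2 * d / S) := by gcongr
      _ = _ := by ring
  linarith

lemma grad_abs (hd : 0 < d) {u : V d → ℝ} {y : V d} {S : ℕ} (hS : 1 ≤ S) {M : ℝ}
    (hh : ∀ x ∈ cube y S, u x = PP u x) (hb : ∀ x ∈ cube y (S + 1), 0 ≤ u x ∧ u x ≤ M) (i : Fin d) :
    |u (y + Pi.single i 1) - u y| ≤ 2 * d * M / S := by
  have h1 := grad hd hS hh hb i
  have h2 := grad (u := fun x => M - u x) hd hS (M := M) (y := y)
    (fun x hx => by rw [PP_sub, PP_const hd, ← hh x hx]) (fun x hx => by have := hb x hx; constructor <;> linarith) i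
  rw [abs_le]
  constructor <;> linarith

noncomputable def tht (d : ℕ) : ℝ := Real.exp (-(4 * (d:ℝ) ^ 2)) - Real.exp (-(9 * (d:ℝ) ^ 3))

lemma tht_pos (hd : 0 < d) : 0 < tht d := by
  have hdr : (1:ℝ) ≤ d := by exact_mod_cast hd
  unfold tht
  rw [sub_pos, Real.exp_lt_exp]
  have : (d:ℝ) ^ 2 ≤ d ^ 3 := pow_le_pow_right₀ hdr (by norm_num)
  nlinarith

lemma doubling (hd : 0 < d) {u : V d → ℝ} (hu : ∀ x, 0 ≤ u x) {w : V d} {r : ℕ} (hr : 2 * d ≤ r ^ 2)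
    (hh : ∀ x ∈ cube w (3 * d * r), u x = PP u x) {A : ℝ} (hA0 : 0 ≤ A) (hA : ∀ x ∈ cube w r, A ≤ u x) :
    ∀ x ∈ cube w (2 * r), tht d * A ≤ u x := by
  have hdr : (1:ℝ) ≤ d := by exact_mod_cast hd
  have hr' : 2 * (d:ℝ) ≤ (r:ℝ) ^ 2 := by exact_mod_cast hr
  have hr0 : (0:ℝ) < (r:ℝ) ^ 2 := by linarith
  have hrp : (r:ℝ) ≠ 0 := by rintro h; rw [h] at hr0; norm_num at hr0
  set l : ℝ := d / (r:ℝ) ^ 2 with hl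
  have hl0 : 0 < l := by positivity
  set e9 := Real.exp (-(9 * (d:ℝ) ^ 3)) with he9
  have he9p : 0 < e9 := Real.exp_pos _
  set Ω : Set (V d) := {x | x ∈ cube w (3 * d * r) ∧ x ∉ cube w r} with hΩ
  have hg1 : ∀ x, gau l w x ≤ 1 := fun x => gau_le_one hl0.le w x
  have hin : ∀ x ∈ cube w r, A * (gau l w x - e9) ≤ u x := by
    intro x hx
    refine le_trans ?_ (hA x hx)
    have := hg1 x
    nlinarith
  have hout : ∀ x, x ∉ cube w (3 * d * r) → A * (gau l w x - e9) ≤ u x := by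
    intro x hx
    refine le_trans ?_ (hu x)
    have h1 := nsq_ge_of_not_cube hx
    have h2 : gau l w x ≤ e9 := by
      unfold gau
      rw [he9, Real.exp_le_exp]
      have : l * (((3 * d * r : ℕ) : ℝ)) ^ 2 ≤ l * nsq (x - w) := by gcongr
      have h3 : l * (((3 * d * r : ℕ) : ℝ)) ^ 2 = 9 * d ^ 3 := by
        rw [hl]; push_cast; field_simp; ring
      linarith
    nlinarith
  have key : ∀ x ∈ Ω, 0 ≤ u x - A * (gau l w x - e9) := by
    refine min_principle hd (G := fun x => u x - A * (gau l w x - e9)) ((cube_finite w (3 * d * r)).subset (fun x h => h.1)) ?_ ?_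
    · intro x hx
      have h1 := gau_subharm hd (r := (r:ℝ)) hr' w x (nsq_ge_of_not_cube hx.2)
      rw [PP_sub, PP_smul, PP_sub, PP_const hd, ← hh x hx.1]
      have := mul_le_mul_of_nonneg_left h1 hA0
      simp only [hl]
      linarith
    · intro x hx _ p hp
      by_cases h3 : x + stp p ∈ cube w (3 * d * r)
      · by_cases h4 : x + stp p ∈ cube w r
        · linarith [hin _ h4]
        · exact absurd ⟨h3, h4⟩ hp
      · linarith [hout _ h3]
  intro x hx
  have h5 : A * (gau l w x - e9) ≤ u x := by
    by_cases h4 : x ∈ cube w r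
    · exact hin x h4
    · have : 2 * r ≤ 3 * d * r := by nlinarith
      linarith [key x ⟨cube_mono this hx, h4⟩]
  refine le_trans ?_ h5
  rw [mul_comm]
  refine mul_le_mul_of_nonneg_left ?_ hA0
  unfold tht
  have h6 : Real.exp (-(4 * (d:ℝ) ^ 2)) ≤ gau l w x := by
    unfold gau
    rw [Real.exp_le_exp]
    have h1 := nsq_le_of_cube hx
    have : l * nsq (x - w) ≤ l * (d * (((2 * r : ℕ) : ℝ)) ^ 2) := by gcongr
    have h3 : l * (d * (((2 * r : ℕ) : ℝ)) ^ 2) = 4 * d ^ 2 := by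
      rw [hl]; push_cast; field_simp; ring
    linarith
  linarith

/-- chaining along one coordinate -/
lemma chain1 {lo hi : V d} {u : V d → ℝ} {C : ℝ} (hC : 1 ≤ C) {s : ℕ}
    (h : ∀ x ∈ Set.Icc lo hi, ∀ i (j : ℤ), |j| ≤ s → x + Pi.single i j ∈ Set.Icc lo hi →
      u x ≤ C * u (x + Pi.single i j)) (k : ℕ) :
    ∀ x ∈ Set.Icc lo hi, ∀ i (t : ℤ), |t| ≤ k * s → x + Pi.single i t ∈ Set.Icc lo hi →
      u x ≤ C ^ k * u (x + Pi.single i t) := by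
  induction k with
  | zero =>
    intro x hx i t ht _
    have : t = 0 := by simpa using ht
    subst this; simp
  | succ k ih =>
    intro x hx i t ht hxt
    set j : ℤ := max (-s) (min t s) with hj
    have hj1 : |j| ≤ s := by rw [abs_le]; omega
    have hj2 : |t - j| ≤ k * s := by
      push_cast at ht
      rw [add_mul, one_mul] at ht
      have h0 : (0:ℤ) ≤ (k:ℤ) * s := by positivity
      generalize (k:ℤ) * s = ks at *
      rw [abs_le] at *; omega
    have hxj : x + Pi.single i j ∈ Set.Icc lo hi := by
      constructor
      · intro a
        have h1 := hx.1 a; have h2 := hxt.1 a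
        by_cases ha : a = i
        · subst ha; simp at h1 h2 ⊢; omega
        · simpa [ha] using h1
      · intro a
        have h1 := hx.2 a; have h2 := hxt.2 a
        by_cases ha : a = i
        · subst ha; simp at h1 h2 ⊢; omega
        · simpa [ha] using h1
    have e : x + Pi.single i j + Pi.single i (t - j) = x + Pi.single i t := by
      rw [add_assoc, ← Pi.single_add]; congr 2; ring
    have h1 := h x hx i j hj1 hxj
    have h2 := ih _ hxj i (t - j) hj2 (by rw [e]; exact hxt)
    rw [e] at h2
    calc u x ≤ C * u (x + Pi.single i j) := h1
      _ ≤ C * (C ^ k * u (x + Pi.single i t)) := by gcongr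
      _ = _ := by ring

lemma chain {lo hi : V d} {u : V d → ℝ} {C : ℝ} (hC : 1 ≤ C) {s : ℕ}
    (h : ∀ x ∈ Set.Icc lo hi, ∀ i (j : ℤ), |j| ≤ s → x + Pi.single i j ∈ Set.Icc lo hi →
      u x ≤ C * u (x + Pi.single i j)) (k : ℕ) {x x' : V d} (hx : x ∈ Set.Icc lo hi) (hx' : x' ∈ Set.Icc lo hi)
    (hk : ∀ i, |x' i - x i| ≤ k * s) : u x ≤ C ^ (k * d) * u x' := by
  have key : ∀ S : Finset (Fin d), ∀ x ∈ Set.Icc lo hi, (∀ i, |x' i - x i| ≤ k * s) → (∀ i ∉ S, x' i = x i) →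
      u x ≤ C ^ (k * S.card) * u x' := by
    intro S
    induction S using Finset.induction_on with
    | empty =>
      intro x _ _ h2
      have : x' = x := funext (fun i => h2 i (by simp))
      subst this; simp
    | insert a S ha ih =>
      intro x hx hk h2
      have hxt : x + Pi.single a (x' a - x a) ∈ Set.Icc lo hi := by
        constructor
        · intro b
          have h1 := hx.1 b; have h5 := hx'.1 b
          by_cases hb : b = a
          · subst hb; simpa using h5
          · simpa [hb] using h1
        · intro b
          have h1 := hx.2 b; have h5 := hx'.2 b
          by_cases hb : b = a
          · subst hb; simpa using h5
          · simpa [hb] using h1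
      have h3 := chain1 hC h k x hx a (x' a - x a) (hk a) hxt
      have h4 := ih _ hxt (fun i => by
        by_cases hi : i = a
        · subst hi; simp; positivity
        · simpa [hi] using hk i) (fun i hi => by
        by_cases hia : i = a
        · subst hia; simp
        · simpa [hia] using h2 i (by simp [hia, hi]))
      rw [Finset.card_insert_of_notMem ha]
      calc u x ≤ _ := h3
        _ ≤ C ^ k * (C ^ (k * S.card) * u x') := by gcongr
        _ = _ := by rw [← mul_assoc, ← pow_add]; congr 2; ring
  have := key Finset.univ x hx hk (fun i hi => absurd (Finset.mem_univ i) hi)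
  simpa using this

lemma cube_eq_Icc (c : V d) (r : ℕ) : cube c r = Set.Icc (fun i => c i - r) (fun i => c i + r) := by
  ext y
  constructor
  · intro hy
    refine ⟨fun i => ?_, fun i => ?_⟩ <;> have := abs_le.1 (hy i) <;> simp only <;> linarith
  · intro hy i
    have h1 := hy.1 i; have h2 := hy.2 i
    simp only at h1 h2
    rw [abs_le]; constructor <;> linarith

lemma single_small (i : Fin d) {j : ℤ} (hj : |j| ≤ 1) : j = 0 ∨ ∃ p : Fin d × Bool, Pi.single i j = stp p := by
  rw [abs_le] at hj
  have : j = 0 ∨ j = 1 ∨ j = -1 := by omega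
  rcases this with h | h | h
  · exact Or.inl h
  · right; exact ⟨(i, true), by simp [stp, h]⟩
  · right; exact ⟨(i, false), by simp [stp, h, Pi.single_neg]⟩

lemma stp_neg (p : Fin d × Bool) : stp (p.1, !p.2) = - stp p := by
  obtain ⟨i, b⟩ := p
  cases b <;> simp [stp]

lemma unit_step (hd : 0 < d) {u : V d → ℝ} (hu : ∀ x, 0 ≤ u x) {x : V d} {i : Fin d} {j : ℤ}
    (hh : u (x + Pi.single i j) = PP u (x + Pi.single i j)) (hj : |j| ≤ 1) :
    u x ≤ 2 * d * u (x + Pi.single i j) := by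
  have hdr : (1:ℝ) ≤ d := by exact_mod_cast hd
  rcases single_small i hj with h | ⟨p, hp⟩
  · subst h
    have := hu x
    simp; nlinarith
  · rw [hp] at hh ⊢
    have := PP_ge_single hd (f := u) (x := x + stp p) (fun _ => hu _) (p.1, !p.2)
    rw [stp_neg, ← hh] at this
    simpa using this

lemma unit_chain (hd : 0 < d) {u : V d → ℝ} (hu : ∀ x, 0 ≤ u x) {c : V d} {k : ℕ}
    (hh : ∀ x ∈ cube c k, u x = PP u x) {x x' : V d} (hx : x ∈ cube c k) (hx' : x' ∈ cube c k) {K : ℕ}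
    (hK : x' ∈ cube x K) : u x ≤ (2 * d) ^ (K * d) * u x' := by
  have hdr : (1:ℝ) ≤ d := by exact_mod_cast hd
  rw [cube_eq_Icc] at hx hx' hh
  refine chain (C := 2 * d) (by linarith) (s := 1) ?_ K hx hx' (fun i => by simpa using hK i)
  intro x hx i j hj hxj
  exact unit_step hd hu (hh _ hxj) (by simpa using hj)

/-- sup-distance -/
def sdist (c x : V d) : ℕ := Finset.univ.sup (fun i => (x i - c i).natAbs)

lemma mem_cube_iff {c x : V d} {k : ℕ} : x ∈ cube c k ↔ sdist c x ≤ k := by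
  unfold sdist cube
  simp only [Set.mem_ofPred_eq, Finset.sup_le_iff, Finset.mem_univ, true_implies]
  refine forall_congr' (fun i => ?_)
  rw [abs_le]
  omega

lemma mem_cube_sdist (c x : V d) : x ∈ cube c (sdist c x) := mem_cube_iff.2 le_rfl

lemma add_chain {u : V d → ℝ} {c : V d} {r : ℕ} {ε : ℝ} (hε : 0 ≤ ε)
    (h : ∀ y ∈ cube c r, ∀ i, |u (y + Pi.single i 1) - u y| ≤ ε) (x : V d) (hx : x ∈ cube c r) :
    u c - r * d * ε ≤ u x := by
  have hc := mem_cube_self c r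
  have hx0 := hx
  rw [cube_eq_Icc] at hx hc h
  have := chain (u := fun y => Real.exp (u y)) (C := Real.exp ε) (Real.one_le_exp hε) (s := 1) (k := r) ?_ hc hx
    (fun i => by simpa using hx0 i)
  · rw [← Real.exp_nat_mul, ← Real.exp_add, Real.exp_le_exp] at this
    push_cast at this
    linarith
  · intro y hy i j hj hyj
    rw [← Real.exp_add, Real.exp_le_exp]
    have hj' : |j| ≤ 1 := by simpa using hj
    rw [abs_le] at hj'
    have : j = 0 ∨ j = 1 ∨ j = -1 := by omega
    rcases this with rfl | rfl | rfl
    · simpa using hε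
    · have := (abs_le.1 (h y hy i)).1; linarith
    · have := (abs_le.1 (h _ hyj i)).2
      rw [add_assoc, ← Pi.single_add] at this
      simp at this ⊢
      linarith

set_option maxHeartbeats 1000000 in
lemma harnack_aux (hd : 0 < d) : ∃ C : ℝ, 1 ≤ C ∧ ∀ (u : V d → ℝ), (∀ x, 0 ≤ u x) → ∀ (c : V d) (R : ℕ), 2 * d ≤ R →
    (∀ x ∈ cube c (4 * d * R), u x = PP u x) → ∀ x ∈ cube c (R / 2), u x ≤ C * u c := by
  have hdr : (1:ℝ) ≤ d := by exact_mod_cast hd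
  obtain ⟨β, hβ⟩ : ∃ β : ℕ, (1/2:ℝ) ^ β < tht d := exists_pow_lt_of_lt_one (tht_pos hd) (by norm_num)
  set r0 := 2 * d with hr0
  set K1 : ℕ := 4 * d ^ 2 * 2 ^ β with hK1
  set L : ℕ := 2 * (K1 + 2) with hL
  set κ : ℝ := ((2 * (d:ℝ)) ^ (r0 * d))⁻¹ with hκ
  have hκ0 : 0 < κ := by positivity
  have hκ2 : κ ≤ 1 / 2 := by
    rw [hκ, one_div]
    apply inv_anti₀ (by norm_num)
    calc (2:ℝ) ≤ 2 * d := by linarith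
      _ = (2 * d) ^ 1 := by ring
      _ ≤ _ := pow_le_pow_right₀ (by linarith) (by rw [hr0]; nlinarith)
  refine ⟨max 1 ((8 * L) ^ β / κ), le_max_left _ _, ?_⟩
  intro u hu c R hR hh x hx
  -- maximiser
  obtain ⟨xs, hxs, hmax⟩ := Set.exists_max_image (cube c R) (fun x => u x * ((R + 1 - sdist c x : ℕ) : ℝ) ^ β)
    (cube_finite c R) ⟨c, mem_cube_self c R⟩
  set M := u xs with hM
  have hM0 : 0 ≤ M := hu xs
  have hsx := mem_cube_iff.1 hxs
  set Dx : ℕ := R + 1 - sdist c xs with hDx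
  have hDx1 : 1 ≤ Dx := by omega
  have hub : ∀ y ∈ cube xs (Dx / 2), u y ≤ 2 ^ β * M := by
    intro y hy
    have hy1 : sdist c y ≤ sdist c xs + Dx / 2 := mem_cube_iff.1 (cube_trans (mem_cube_sdist c xs) hy le_rfl)
    have hyR : y ∈ cube c R := mem_cube_iff.2 (by omega)
    have h1 := hmax y hyR
    have h2 : (Dx:ℝ) ≤ 2 * ((R + 1 - sdist c y : ℕ) : ℝ) := by
      have : Dx ≤ 2 * (R + 1 - sdist c y) := by omega
      exact_mod_cast this
    have hD0 : (0:ℝ) < Dx := by exact_mod_cast hDx1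
    have h3 : u y * (Dx:ℝ) ^ β ≤ (2 ^ β * M) * (Dx:ℝ) ^ β := by
      calc u y * (Dx:ℝ) ^ β ≤ u y * (2 * ((R + 1 - sdist c y : ℕ) : ℝ)) ^ β := by
            have := hu y
            gcongr
        _ = 2 ^ β * (u y * ((R + 1 - sdist c y : ℕ) : ℝ) ^ β) := by rw [mul_pow]; ring
        _ ≤ 2 ^ β * (M * (Dx:ℝ) ^ β) := by gcongr
        _ = _ := by ring
    exact le_of_mul_le_mul_right h3 (by positivity)
  have hLpos : 0 < L := by omega
  set r : ℕ := max r0 (Dx / L) with hr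
  have hrr0 : r0 ≤ r := le_max_left _ _
  have hr1 : 1 ≤ r := by omega
  have hrR : r ≤ 2 * R := by
    have : Dx / L ≤ Dx := Nat.div_le_self _ _
    omega
  have hDr : Dx ≤ 2 * L * r := by
    have h1 : Dx < L * (Dx / L) + L := by
      have := Nat.div_add_mod Dx L; have := Nat.mod_lt Dx hLpos; omega
    have h2 : Dx / L ≤ r := le_max_right _ _
    nlinarith
  have hhar : ∀ s, s ≤ 3 * d * R → ∀ y ∈ cube xs s, u y = PP u y := by
    intro s hs y hy
    refine hh y (cube_trans hxs hy ?_)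
    nlinarith
  have hbase : ∀ y ∈ cube xs r, κ * M ≤ u y := by
    by_cases hc : r0 < Dx / L
    · have hre : r = Dx / L := by omega
      have hrL : L * r ≤ Dx := by rw [hre]; exact Nat.mul_div_le Dx L
      have hKr : (K1 + 2) * r ≤ Dx / 2 := by
        rw [Nat.le_div_iff_mul_le (by norm_num)]; calc _ = L * r := by rw [hL]; ring
          _ ≤ _ := hrL
      have hK1p : 0 < K1 := by positivity
      have hDR : Dx / 2 ≤ R := by omega
      have hS1 : 1 ≤ K1 * r := Nat.mul_pos hK1p hr1
      have hsub : ∀ y ∈ cube xs r, ∀ s ≤ K1 * r + 1, cube y s ⊆ cube xs (Dx / 2) := by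
        intro y hy s hs z hz
        refine cube_trans hy hz ?_
        nlinarith
      have hg := add_chain (u := u) (c := xs) (r := r) (ε := 2 * d * (2 ^ β * M) / ((K1 * r : ℕ) : ℝ)) (by positivity) ?_
      · intro y hy
        have := hg y hy
        have e : (r:ℝ) * d * (2 * d * (2 ^ β * M) / ((K1 * r : ℕ) : ℝ)) = M / 2 := by
          have : (0:ℝ) < r := by exact_mod_cast hr1
          rw [hK1]; push_cast; field_simp; ring
        rw [e] at this
        nlinarith
      · intro y hy i
        refine grad_abs hd hS1 (M := 2 ^ β * M) ?_ ?_ i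
        · intro z hz
          refine hhar (Dx / 2) (by nlinarith) z (hsub y hy _ (by omega) hz)
        · intro z hz
          exact ⟨hu z, hub z (hsub y hy _ le_rfl hz)⟩
    · have hre : r = r0 := by omega
      intro y hy
      have := unit_chain hd hu (hhar r (by rw [hre]; nlinarith)) (mem_cube_self xs r) hy hy
      rw [hre] at this
      rw [hκ, inv_mul_le_iff₀ (by positivity)]
      exact this
  have hind : ∀ j : ℕ, 2 ^ j * r ≤ 2 * R → ∀ y ∈ cube xs (2 ^ j * r), κ * M * ((1/2:ℝ) ^ β) ^ j ≤ u y := by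
    intro j
    induction j with
    | zero => intro _ y hy; simpa using hbase y (by simpa using hy)
    | succ j ih =>
      intro hj y hy
      have e : 2 ^ (j + 1) * r = 2 * (2 ^ j * r) := by ring
      rw [e] at hj hy
      have h1 := ih (by omega)
      have h2p : 1 ≤ 2 ^ j := Nat.one_le_two_pow
      have h2 := doubling hd hu (w := xs) (r := 2 ^ j * r) ?_ ?_ (A := κ * M * ((1/2:ℝ) ^ β) ^ j) (by positivity) h1 y hy
      · refine le_trans ?_ h2
        rw [pow_succ, ← mul_assoc, mul_comm]
        gcongr
      · have : 2 * d ≤ 2 ^ j * r := by nlinarith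
        nlinarith
      · refine hhar _ ?_
        have : 2 ^ j * r ≤ R := by omega
        nlinarith
  -- choose j
  obtain ⟨j, hj1, hj2⟩ : ∃ j, 2 ^ j * r ≤ 2 * R ∧ 2 * R < 2 ^ (j + 1) * r := by
    have hex : ∃ j, 2 * R < 2 ^ (j+1) * r := by
      obtain ⟨j, hj⟩ := pow_unbounded_of_one_lt (2 * R) (show 1 < 2 by norm_num)
      refine ⟨j, ?_⟩
      have : 2 ^ j ≤ 2 ^ (j+1) := Nat.pow_le_pow_right (by norm_num) (by omega)
      nlinarith
    refine ⟨Nat.find hex, ?_, Nat.find_spec hex⟩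
    rcases Nat.eq_zero_or_pos (Nat.find hex) with h | h
    · rw [h]; simpa using hrR
    · have := Nat.find_min hex (Nat.sub_lt h one_pos)
      rw [Nat.sub_add_cancel (show 1 ≤ _ from h)] at this
      omega
  have hcx : c ∈ cube xs (2 ^ j * r) := by
    refine cube_mono ?_ (cube_symm hxs)
    rw [pow_succ] at hj2; nlinarith
  have huc := hind j hj1 c hcx
  have hrpos : (0:ℝ) < r := by exact_mod_cast hr1
  have hRpos : (0:ℝ) < R := by exact_mod_cast (by omega : 0 < R)
  -- combine
  have h1 : κ * (M * (Dx:ℝ) ^ β) ≤ (4 * L * R) ^ β * u c := by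
    have ha : ((1/2:ℝ) ^ β) ^ j * (((2 ^ j * r : ℕ) : ℝ)) ^ β = (r:ℝ) ^ β := by
      push_cast
      rw [mul_pow, ← mul_assoc, ← pow_mul, ← pow_mul, mul_comm j β, ← mul_pow]; norm_num
    have hb : (Dx:ℝ) ≤ 2 * L * r := by exact_mod_cast hDr
    have hc' : ((2 ^ j * r : ℕ) : ℝ) ≤ 2 * R := by exact_mod_cast hj1
    calc κ * (M * (Dx:ℝ) ^ β) ≤ κ * (M * (2 * L * r) ^ β) := by gcongr
      _ = (2 * L) ^ β * (κ * M * (r:ℝ) ^ β) := by rw [mul_pow]; ring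
      _ = (2 * L) ^ β * ((κ * M * ((1/2:ℝ) ^ β) ^ j) * (((2 ^ j * r : ℕ) : ℝ)) ^ β) := by rw [← ha]; ring
      _ ≤ (2 * L) ^ β * (u c * (2 * R) ^ β) := by have := hu c; gcongr
      _ = _ := by rw [show (4 * (L:ℝ) * R) = (2 * L) * (2 * R) by ring, mul_pow (2 * (L:ℝ))]; ring
  have hsx := mem_cube_iff.1 hx
  have h2 := hmax x (cube_mono (Nat.div_le_self _ _) hx)
  have h3 : (R:ℝ) / 2 ≤ ((R + 1 - sdist c x : ℕ) : ℝ) := by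
    rw [div_le_iff₀ (by norm_num)]
    have : R ≤ (R + 1 - sdist c x) * 2 := by omega
    exact_mod_cast this
  have h4 : u x * ((R:ℝ) / 2) ^ β ≤ M * (Dx:ℝ) ^ β := by
    refine le_trans ?_ h2
    have := hu x
    gcongr
  have h5 : u x ≤ (8 * L) ^ β / κ * u c := by
    have h6 : (u x * κ) * ((R:ℝ) / 2) ^ β ≤ ((8 * L) ^ β * u c) * ((R:ℝ) / 2) ^ β := by
      calc (u x * κ) * ((R:ℝ) / 2) ^ β = κ * (u x * ((R:ℝ) / 2) ^ β) := by ring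
        _ ≤ κ * (M * (Dx:ℝ) ^ β) := by gcongr
        _ ≤ _ := h1
        _ = _ := by rw [show (4 * (L:ℝ) * R) = (8 * L) * (R / 2) by ring, mul_pow (8 * (L:ℝ))]; ring
    have h7 := le_of_mul_le_mul_right h6 (by positivity)
    rw [div_mul_eq_mul_div, le_div_iff₀ hκ0]
    exact h7
  refine h5.trans ?_
  have := hu c
  gcongr
  exact le_max_right _ _

/-- Harnack inequality at all scales. -/
lemma harnack (hd : 0 < d) : ∃ C : ℝ, 1 ≤ C ∧ ∀ (u : V d → ℝ), (∀ x, 0 ≤ u x) → ∀ (c : V d) (R : ℕ),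
    (∀ x ∈ cube c (4 * d * R), u x = PP u x) → ∀ x ∈ cube c (R / 2), u x ≤ C * u c := by
  have hdr : (1:ℝ) ≤ d := by exact_mod_cast hd
  obtain ⟨C, hC, h⟩ := harnack_aux (d := d) hd
  refine ⟨max C ((2 * d) ^ (2 * d * d)), hC.trans (le_max_left _ _), ?_⟩
  intro u hu c R hh x hx
  have huc := hu c
  by_cases hR : 2 * d ≤ R
  · refine (h u hu c R hR hh x hx).trans ?_
    gcongr
    exact le_max_left _ _
  · have hk : R / 2 ≤ 4 * d * R := by
      have : R / 2 ≤ R := Nat.div_le_self _ _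
      nlinarith
    have h1 := unit_chain hd hu (c := c) (k := 4 * d * R) hh (cube_mono hk hx) (mem_cube_self _ _) (K := R / 2) (cube_symm hx)
    refine h1.trans ?_
    gcongr
    refine le_trans (pow_le_pow_right₀ (by linarith) ?_) (le_max_right _ _)
    have : R / 2 ≤ 2 * d := by omega
    nlinarith

lemma box_harnack (hd : 0 < d) (k : ℕ) : ∃ C : ℝ, 1 ≤ C ∧ ∀ (u : V d → ℝ), (∀ x, 0 ≤ u x) → ∀ (lo hi : V d) (ρ : ℕ),
    (∀ x ∈ Set.Icc lo hi, ∀ y ∈ cube x ρ, u y = PP u y) → ∀ x ∈ Set.Icc lo hi, ∀ x' ∈ Set.Icc lo hi,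
    (∀ i, |x' i - x i| ≤ k * (ρ + 1)) → u x ≤ C * u x' := by
  have hdr : (1:ℝ) ≤ d := by exact_mod_cast hd
  obtain ⟨C, hC, h⟩ := harnack (d := d) hd
  obtain ⟨B, hC1, hBC, hBd⟩ : ∃ B : ℝ, 1 ≤ B ∧ C ≤ B ∧ 2 * d ≤ B :=
    ⟨max C (2 * d), hC.trans (le_max_left _ _), le_max_left _ _, le_max_right _ _⟩
  refine ⟨B ^ (16 * d * k * d), one_le_pow₀ hC1, ?_⟩
  intro u hu lo hi ρ hh x hx x' hx' hk
  obtain ⟨R, hR⟩ : ∃ R, R = ρ / (4 * d) := ⟨_, rfl⟩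
  have hRρ : 4 * d * R ≤ ρ := by rw [hR]; exact Nat.mul_div_le _ _
  have hρ : ρ + 1 ≤ 16 * d * max 1 (R / 2) := by
    have h1 : ρ < 4 * d * (R + 1) := by
      rw [hR]; exact Nat.lt_mul_div_succ ρ (show 0 < 4 * d by omega)
    have h2 : R + 1 ≤ 4 * max 1 (R / 2) := by omega
    calc ρ + 1 ≤ 4 * d * (R + 1) := h1
      _ ≤ 4 * d * (4 * max 1 (R / 2)) := Nat.mul_le_mul_left _ h2
      _ = _ := by ring
  refine chain hC1 (s := max 1 (R / 2)) ?_ (16 * d * k) hx hx' ?_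
  · intro y hy i j hj hyj
    have hu1 := hu (y + Pi.single i j)
    by_cases h1 : |j| ≤ 1
    · refine (unit_step hd hu (hh _ hyj _ (mem_cube_self _ _)) h1).trans ?_
      exact mul_le_mul_of_nonneg_right hBd hu1
    · have hy2 : y ∈ cube (y + Pi.single i j) (R / 2) := by
        intro a
        by_cases ha : a = i
        · subst ha
          have : |j| ≤ ((R / 2 : ℕ) : ℤ) := by
            generalize R / 2 = R2 at *
            omega
          simpa using this
        · simp [ha]; positivity
      have h3 : ∀ z ∈ cube (y + Pi.single i j) (4 * d * R), u z = PP u z :=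
        fun z hz => hh _ hyj z (cube_mono hRρ hz)
      have h4 := h u hu _ R h3 y hy2
      refine h4.trans ?_
      exact mul_le_mul_of_nonneg_right hBC hu1
  · intro i
    refine (hk i).trans ?_
    have : k * (ρ + 1) ≤ 16 * d * k * max 1 (R / 2) := by
      calc k * (ρ + 1) ≤ k * (16 * d * max 1 (R / 2)) := by gcongr
        _ = _ := by ring
    exact_mod_cast this


lemma inv_bound {y : ℝ} (hy : 0.98 ≤ y) : 1 / y ≤ 1 - (y ^ 4 - 1) / 4 + 11 / 64 * (y ^ 4 - 1) ^ 2 := by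
  rw [div_le_iff₀ (by linarith)]
  have hQ : 0 ≤ 11*y^7+22*y^6+33*y^5+44*y^4+17*y^3-10*y^2-37*y-64 := by
    obtain ⟨t, ht, rfl⟩ : ∃ t, 0 ≤ t ∧ y = 0.98 + t := ⟨y - 0.98, by linarith, by ring⟩
    ring_nf
    positivity
  nlinarith [mul_nonneg (sq_nonneg (y - 1)) hQ]

noncomputable def YY (x : V d) : ℝ := Real.sqrt (Real.sqrt (nsq x + 400))
noncomputable def ww (x : V d) : ℝ := 1 / YY x

lemma YY_pos (x : V d) : 0 < YY x := by
  unfold YY; have := nsq_nonneg x; positivity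

lemma YY_pow (x : V d) : YY x ^ 4 = nsq x + 400 := by
  unfold YY
  have := nsq_nonneg x
  rw [show ∀ a : ℝ, a ^ 4 = (a ^ 2) ^ 2 by intro a; ring, Real.sq_sqrt (by positivity), Real.sq_sqrt (by positivity)]

lemma ww_pos (x : V d) : 0 < ww x := by
  unfold ww; have := YY_pos x; positivity

lemma ww_step (x x' : V d) {t : ℝ} (h : nsq x' = nsq x + t) (ht : -(nsq x + 400) / 20 ≤ t) :
    ww x' ≤ ww x * (1 - t / (nsq x + 400) / 4 + 11 / 64 * (t / (nsq x + 400)) ^ 2) := by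
  have hp := YY_pos x
  have hp' := YY_pos x'
  have hn := nsq_nonneg x
  have e : (YY x' / YY x) ^ 4 - 1 = t / (nsq x + 400) := by
    rw [div_pow, YY_pow, YY_pow, h]; field_simp; ring
  have hy : 0.98 ≤ YY x' / YY x := by
    by_contra hc
    push Not at hc
    have h1 : (YY x' / YY x) ^ 4 < 0.98 ^ 4 := by
      apply pow_lt_pow_left₀ hc (by positivity) (by norm_num)
    have h2 : (YY x' / YY x) ^ 4 = 1 + t / (nsq x + 400) := by linarith
    have h3 : -(1/20) ≤ t / (nsq x + 400) := by rw [le_div_iff₀ (by positivity)]; linarith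
    rw [h2] at h1
    norm_num at h1
    linarith
  have := inv_bound hy
  rw [e] at this
  unfold ww
  calc 1 / YY x' = 1 / YY x * (1 / (YY x' / YY x)) := by field_simp
    _ ≤ _ := by gcongr

lemma abs_coord_le (x : V d) (i : Fin d) : 40 * |(x i : ℝ)| ≤ nsq x + 400 := by
  have := sq_le_nsq x i
  rw [← sq_abs] at this
  nlinarith [sq_nonneg (|(x i : ℝ)| - 20)]

lemma ww_PP (hd : 3 ≤ d) (x : V d) : PP ww x ≤ ww x * (1 - 1 / (48 * (nsq x + 400))) := by
  have hdr : (3:ℝ) ≤ d := by exact_mod_cast hd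
  have hn := nsq_nonneg x
  set σ := nsq x + 400 with hσ
  have hσ0 : 0 < σ := by positivity
  rw [PP_eq, div_le_iff₀ (by positivity)]
  have hterm : ∀ i : Fin d, ww (x + Pi.single i 1) + ww (x - Pi.single i 1) ≤
      ww x * (2 - 1 / (2 * σ) + 11 / 64 * (2 + 8 * (x i : ℝ) ^ 2) / σ ^ 2) := by
    intro i
    have hc := abs_coord_le x i
    have hc1 := neg_abs_le (x i : ℝ)
    have hc2 := le_abs_self (x i : ℝ)
    have h1 := ww_step x _ (nsq_add_single x i) (by linarith)
    have h2 := ww_step x _ (nsq_sub_single x i) (by linarith)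
    rw [← hσ] at h1 h2
    refine (add_le_add h1 h2).trans (le_of_eq ?_)
    field_simp
    ring
  refine (Finset.sum_le_sum (fun i _ => hterm i)).trans ?_
  rw [← Finset.mul_sum, mul_assoc]
  refine mul_le_mul_of_nonneg_left ?_ (ww_pos x).le
  have e : ∑ i : Fin d, (2 - 1 / (2 * σ) + 11 / 64 * (2 + 8 * (x i : ℝ) ^ 2) / σ ^ 2)
      = d * (2 - 1 / (2 * σ)) + 11 / 64 * (2 * d + 8 * nsq x) / σ ^ 2 := by
    rw [Finset.sum_add_distrib, ← Finset.sum_div, ← Finset.mul_sum, Finset.sum_add_distrib, ← Finset.mul_sum]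
    simp [nsq]
    ring
  rw [e]
  have h3 : 11 / 64 * (2 * d + 8 * nsq x) / σ ^ 2 ≤ d * (11 / 24) / σ := by
    rw [div_le_div_iff₀ (by positivity) hσ0]
    have : 11 / 64 * (2 * d + 8 * nsq x) ≤ d * (11 / 24) * σ := by
      rw [hσ]; nlinarith
    nlinarith
  have h4 : (1 - 1 / (48 * σ)) * (2 * d) = d * (2 - 1 / (2 * σ)) + d * (11 / 24) / σ := by
    field_simp; ring
  linarith

/-- one step operator killed off `U` -/
noncomputable def TU (U : Set (V d)) : (V d → ℝ) →ₗ[ℝ] (V d → ℝ) where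
  toFun f := fun x => PP (fun y => if y ∈ U then f y else 0) x
  map_add' f g := by
    funext x
    simp only [Pi.add_apply]
    rw [← PP_add]
    congr 1; funext y; split <;> simp
  map_smul' c f := by
    funext x
    simp only [Pi.smul_apply, smul_eq_mul, RingHom.id_apply]
    rw [← PP_smul]
    congr 1; funext y; split <;> simp

lemma TU_apply (U : Set (V d)) (f : V d → ℝ) (x : V d) : TU U f x = PP (fun y => if y ∈ U then f y else 0) x := rfl

lemma TU_mono {U : Set (V d)} {f g : V d → ℝ} (h : ∀ x ∈ U, f x ≤ g x) (x : V d) : TU U f x ≤ TU U g x := by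
  rw [TU_apply, TU_apply]
  refine PP_mono (fun p => ?_)
  split
  · exact h _ (by assumption)
  · exact le_rfl

lemma TU_pow_mono {U : Set (V d)} {f g : V d → ℝ} (t : ℕ) : (∀ x, f x ≤ g x) → ∀ x, ((TU U) ^ t) f x ≤ ((TU U) ^ t) g x := by
  induction t with
  | zero => intro h x; simpa using h x
  | succ t ih =>
    intro h x
    rw [pow_succ', Module.End.mul_apply, Module.End.mul_apply]
    exact TU_mono (fun y _ => ih h y) x

lemma TU_pow_nonneg {U : Set (V d)} {f : V d → ℝ} (h : ∀ x, 0 ≤ f x) (t : ℕ) (x : V d) : 0 ≤ ((TU U) ^ t) f x := by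
  have := TU_pow_mono (U := U) (f := 0) (g := f) t (fun x => h x) x
  simpa using this

lemma TU_sub_mono {U W : Set (V d)} (hUW : U ⊆ W) {f : V d → ℝ} (h : ∀ x, 0 ≤ f x) (x : V d) : TU U f x ≤ TU W f x := by
  rw [TU_apply, TU_apply]
  refine PP_mono (fun p => ?_)
  by_cases h1 : x + stp p ∈ U
  · simp [h1, hUW h1]
  · simp only [h1, if_false]
    split
    · exact h _
    · exact le_rfl

lemma TU_pow_sub_mono {U W : Set (V d)} (hUW : U ⊆ W) {f : V d → ℝ} (h : ∀ x, 0 ≤ f x) (t : ℕ) (x : V d) :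
    ((TU U) ^ t) f x ≤ ((TU W) ^ t) f x := by
  induction t generalizing x with
  | zero => simp
  | succ t ih =>
    rw [pow_succ', pow_succ', Module.End.mul_apply, Module.End.mul_apply]
    exact (TU_mono (fun y _ => ih y) x).trans (TU_sub_mono hUW (TU_pow_nonneg h t) x)

/-- potential bound -/
lemma TU_sum_le {U : Set (V d)} {f w : V d → ℝ} (hw : ∀ x, 0 ≤ w x) (h : ∀ x, f x ≤ w x - TU U w x) (T : ℕ) (x : V d) :
    ∑ t ∈ Finset.range T, ((TU U) ^ t) f x ≤ w x := by
  have key : ∑ t ∈ Finset.range T, ((TU U) ^ t) f x ≤ w x - ((TU U) ^ T) w x := by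
    induction T with
    | zero => simp
    | succ T ih =>
      rw [Finset.sum_range_succ]
      have h1 := TU_pow_mono (U := U) (f := f) (g := w - TU U w) T (fun x => h x) x
      rw [map_sub] at h1
      rw [pow_succ, Module.End.mul_apply]
      simp only [Pi.sub_apply] at h1
      linarith
  have := TU_pow_nonneg (U := U) hw T x
  linarith

lemma ww_gap (hd : 3 ≤ d) (U : Set (V d)) (x : V d) : ww x / (48 * (nsq x + 400)) ≤ ww x - TU U ww x := by
  have h1 := ww_PP hd x
  have h2 : TU U ww x ≤ PP ww x := by
    rw [TU_apply]
    refine PP_mono (fun p => ?_)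
    split
    · exact le_rfl
    · exact (ww_pos _).le
  have : ww x * (1 - 1 / (48 * (nsq x + 400))) = ww x - ww x / (48 * (nsq x + 400)) := by ring
  linarith

noncomputable def ind (y : V d) : V d → ℝ := fun x => if x = y then 1 else 0

lemma TU_sum_finite (hd : 3 ≤ d) (U : Set (V d)) {f : V d → ℝ} (hf : ∀ x, 0 ≤ f x) {B : Set (V d)} (hB : B.Finite)
    (hfB : ∀ x ∉ B, f x = 0) (x : V d) : Summable (fun t => ((TU U) ^ t) f x) := by
  obtain ⟨M, hM⟩ : ∃ M : ℝ, ∀ y ∈ B, f y * (48 * (nsq y + 400)) / ww y ≤ M := by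
    obtain ⟨M, hM⟩ := (hB.image (fun y => f y * (48 * (nsq y + 400)) / ww y)).bddAbove
    exact ⟨M, fun y hy => hM (Set.mem_image_of_mem _ hy)⟩
  refine summable_of_sum_range_le (c := max M 0 * ww x) (fun t => TU_pow_nonneg hf t x) (fun T => ?_)
  have := TU_sum_le (U := U) (f := f) (w := fun x => max M 0 * ww x) (fun x => by have := ww_pos x; positivity) ?_ T x
  · simpa using this
  · intro y
    have e : TU U (fun x => max M 0 * ww x) y = max M 0 * TU U ww y := by
      have := congrFun ((TU U).map_smul (max M 0) ww) y
      exact this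
    have hg := ww_gap hd U y
    have hwp := ww_pos y
    have hn := nsq_nonneg y
    have h0 : 0 ≤ ww y / (48 * (nsq y + 400)) := by positivity
    rw [e, ← mul_sub]
    by_cases hy : y ∈ B
    · have h1 := (hM y hy).trans (le_max_left M 0)
      rw [div_le_iff₀ hwp] at h1
      have h2 : f y ≤ max M 0 * (ww y / (48 * (nsq y + 400))) := by
        rw [← mul_div_assoc, le_div_iff₀ (by positivity)]; exact h1
      exact h2.trans (by gcongr)
    · rw [hfB y hy]
      have : 0 ≤ ww y - TU U ww y := h0.trans hg
      positivity

/-- Green kernel pieces -/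
noncomputable def aa (U : Set (V d)) (x0 : V d) (t : ℕ) (y : V d) : ℝ := ((TU U) ^ t) (ind y) x0

lemma ind_nonneg (y x : V d) : 0 ≤ ind y x := by unfold ind; split <;> norm_num

lemma aa_nonneg (U : Set (V d)) (x0 : V d) (t : ℕ) (y : V d) : 0 ≤ aa U x0 t y := TU_pow_nonneg (ind_nonneg y) t x0

lemma aa_zero (U : Set (V d)) (x0 y : V d) : aa U x0 0 y = if y = x0 then 1 else 0 := by
  simp [aa, ind, eq_comm]

lemma aa_succ (U : Set (V d)) (x0 : V d) (t : ℕ) (y : V d) :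
    aa U x0 (t + 1) y = if y ∈ U then PP (aa U x0 t) y else 0 := by
  unfold aa
  rw [pow_succ, Module.End.mul_apply]
  by_cases hy : y ∈ U
  · rw [if_pos hy]
    have e : TU U (ind y) = (1 / (2 * (d:ℝ))) • ∑ p : Fin d × Bool, ind (y + stp p) := by
      funext x
      rw [TU_apply]
      simp only [Pi.smul_apply, Finset.sum_apply, smul_eq_mul]
      unfold PP
      rw [div_eq_mul_one_div, mul_comm]
      congr 1
      let flip : Equiv.Perm (Fin d × Bool) := ⟨fun p => (p.1, !p.2), fun p => (p.1, !p.2), fun p => by simp, fun p => by simp⟩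
      rw [← Equiv.sum_comp flip]
      refine Finset.sum_congr rfl (fun p _ => ?_)
      have : stp (flip p) = - stp p := stp_neg p
      rw [this]
      have h2 : (x + -stp p = y) ↔ (x = y + stp p) := by
        constructor
        · intro h; rw [← h]; abel
        · intro h; rw [h]; abel
      by_cases h : x = y + stp p
      · have h3 := h2.2 h
        simp [ind, h3, hy, ← h]
      · have h3 : ¬ (x + -stp p = y) := fun h' => h (h2.1 h')
        simp [ind, h3, h]
    rw [e, map_smul, map_sum]
    simp only [Pi.smul_apply, Finset.sum_apply, smul_eq_mul]
    unfold PP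
    ring
  · rw [if_neg hy]
    have e : TU U (ind y) = 0 := by
      funext x
      rw [TU_apply]
      unfold PP
      have : ∀ p : Fin d × Bool, (if x + stp p ∈ U then ind y (x + stp p) else 0) = 0 := by
        intro p
        by_cases h : x + stp p ∈ U
        · have : x + stp p ≠ y := fun h' => hy (h' ▸ h)
          simp [ind, this]
        · simp [h]
      simp [this]
    rw [e]; simp

noncomputable def gg (U : Set (V d)) (x0 y : V d) : ℝ := ∑' t, aa U x0 t y

lemma aa_summable (hd : 3 ≤ d) (U : Set (V d)) (x0 y : V d) : Summable (fun t => aa U x0 t y) :=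
  TU_sum_finite hd U (ind_nonneg y) (Set.finite_singleton y) (fun x hx => by
    have : x ≠ y := hx
    simp [ind, this]) x0

lemma gg_nonneg (U : Set (V d)) (x0 y : V d) : 0 ≤ gg U x0 y := tsum_nonneg (fun t => aa_nonneg U x0 t y)

lemma PP_tsum {f : ℕ → V d → ℝ} (hf : ∀ y, Summable (fun t => f t y)) (x : V d) :
    PP (fun y => ∑' t, f t y) x = ∑' t, PP (f t) x := by
  unfold PP
  rw [tsum_div_const, Summable.tsum_finsetSum (fun p _ => hf _)]

lemma gg_harm (hd : 3 ≤ d) (U : Set (V d)) (x0 : V d) {y : V d} (hy : y ∈ U) (hne : y ≠ x0) :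
    gg U x0 y = PP (gg U x0) y := by
  unfold gg
  rw [PP_tsum (fun y => aa_summable hd U x0 y), (aa_summable hd U x0 y).tsum_eq_zero_add]
  rw [aa_zero, if_neg hne, zero_add]
  refine tsum_congr (fun t => ?_)
  rw [aa_succ, if_pos hy]

/-- survival probabilities up to time `T` -/
noncomputable def qq (D K : Set (V d)) : ℕ → V d → ℝ
  | 0 => fun x => if x ∈ K then 0 else 1
  | T + 1 => fun x => if x ∈ K then 0 else if x ∈ D then PP (qq D K T) x else 1

lemma qq_bounds (hd : 0 < d) (D K : Set (V d)) (T : ℕ) : ∀ x, 0 ≤ qq D K T x ∧ qq D K T x ≤ 1 := by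
  induction T with
  | zero => intro x; unfold qq; split <;> norm_num
  | succ T ih =>
    intro x; unfold qq
    split
    · norm_num
    · split
      · exact ⟨PP_nonneg (fun p => (ih _).1), PP_le_const hd (fun p => (ih _).2)⟩
      · norm_num

lemma qq_anti_step (hd : 0 < d) (D K : Set (V d)) (T : ℕ) : ∀ x, qq D K (T + 1) x ≤ qq D K T x := by
  induction T with
  | zero =>
    intro x
    have h1 := (qq_bounds hd D K 1 x).2
    by_cases h : x ∈ K
    · simp [qq, h]
    · simpa [qq, h] using h1
  | succ T ih =>
    intro x
    show (if x ∈ K then (0:ℝ) else if x ∈ D then PP (qq D K (T + 1)) x else 1) ≤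
      (if x ∈ K then (0:ℝ) else if x ∈ D then PP (qq D K T) x else 1)
    split
    · exact le_rfl
    · split
      · exact PP_mono (fun p => ih _)
      · exact le_rfl

noncomputable def qlim (D K : Set (V d)) (x : V d) : ℝ := ⨅ T, qq D K T x

lemma qq_tendsto (hd : 0 < d) (D K : Set (V d)) (x : V d) :
    Filter.Tendsto (fun T => qq D K T x) Filter.atTop (nhds (qlim D K x)) := by
  refine tendsto_atTop_ciInf (antitone_nat_of_succ_le (fun T => qq_anti_step hd D K T x)) ⟨0, ?_⟩
  rintro _ ⟨T, rfl⟩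
  exact (qq_bounds hd D K T x).1

lemma qlim_le (hd : 0 < d) (D K : Set (V d)) (T : ℕ) (x : V d) : qlim D K x ≤ qq D K T x := by
  refine ciInf_le ⟨0, ?_⟩ T
  rintro _ ⟨T, rfl⟩
  exact (qq_bounds hd D K T x).1

lemma qlim_nonneg (hd : 0 < d) (D K : Set (V d)) (x : V d) : 0 ≤ qlim D K x :=
  le_ciInf (fun T => (qq_bounds hd D K T x).1)

lemma qlim_le_one (hd : 0 < d) (D K : Set (V d)) (x : V d) : qlim D K x ≤ 1 :=
  (qlim_le hd D K 0 x).trans (qq_bounds hd D K 0 x).2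

lemma qlim_K (hd : 0 < d) (D K : Set (V d)) {x : V d} (hx : x ∈ K) : qlim D K x = 0 := by
  refine le_antisymm ((qlim_le hd D K 0 x).trans ?_) (qlim_nonneg hd D K x)
  simp [qq, hx]

lemma PP_tendsto {f : ℕ → V d → ℝ} {g : V d → ℝ} (h : ∀ y, Filter.Tendsto (fun T => f T y) Filter.atTop (nhds (g y))) (x : V d) :
    Filter.Tendsto (fun T => PP (f T) x) Filter.atTop (nhds (PP g x)) := by
  unfold PP
  exact (tendsto_finsetSum _ (fun p _ => h _)).div_const _

lemma qlim_harm (hd : 0 < d) (D K : Set (V d)) {x : V d} (hx : x ∉ K) (hD : x ∈ D) : qlim D K x = PP (qlim D K) x := by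
  have h1 := (Filter.tendsto_add_atTop_iff_nat 1).2 (qq_tendsto hd D K x)
  have h2 := PP_tendsto (qq_tendsto hd D K) x
  refine tendsto_nhds_unique h1 (h2.congr (fun T => ?_))
  simp [qq, hx, hD]

lemma qlim_sub (hd : 0 < d) (D K : Set (V d)) {x : V d} (hD : x ∈ D) : qlim D K x ≤ PP (qlim D K) x := by
  by_cases hx : x ∈ K
  · rw [qlim_K hd D K hx]
    exact PP_nonneg (fun p => qlim_nonneg hd D K _)
  · exact (qlim_harm hd D K hx hD).le

/-- escape estimate far away -/
lemma qq_far1 (hd : 3 ≤ d) {D K : Set (V d)} {N : ℕ} (hN : 16 ≤ N) (hK : K ⊆ cube 0 N) (T : ℕ) :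
    ∀ x, 1 - ww x * (Real.sqrt (Real.sqrt (d * N ^ 2 + 400))) ≤ qq D K T x := by
  have hd0 : 0 < d := by omega
  have hin : ∀ x ∈ K, 1 - ww x * (Real.sqrt (Real.sqrt (d * N ^ 2 + 400))) ≤ 0 := by
    intro x hx
    have h1 := nsq_le_of_cube (hK hx)
    rw [sub_zero] at h1
    have h2 : YY x ≤ Real.sqrt (Real.sqrt (d * N ^ 2 + 400)) := by
      unfold YY
      exact Real.sqrt_le_sqrt (Real.sqrt_le_sqrt (by linarith))
    have h3 := YY_pos x
    have : 1 ≤ ww x * (Real.sqrt (Real.sqrt (d * N ^ 2 + 400))) := by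
      unfold ww
      rw [one_div, inv_mul_eq_div, le_div_iff₀ h3]; linarith
    linarith
  have hle1 : ∀ x : V d, 1 - ww x * (Real.sqrt (Real.sqrt (d * N ^ 2 + 400))) ≤ 1 := by
    intro x
    have := (ww_pos x).le
    have : 0 ≤ ww x * (Real.sqrt (Real.sqrt (d * N ^ 2 + 400))) := by positivity
    linarith
  induction T with
  | zero =>
    intro x
    show _ ≤ (if x ∈ K then (0:ℝ) else 1)
    split
    · exact hin x (by assumption)
    · exact hle1 x
  | succ T ih =>
    intro x
    show _ ≤ (if x ∈ K then (0:ℝ) else if x ∈ D then PP (qq D K T) x else 1)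
    split
    · exact hin x (by assumption)
    · split
      · have h1 := PP_mono (f := fun x => 1 - Real.sqrt (Real.sqrt (d * N ^ 2 + 400)) * ww x) (g := qq D K T) (x := x)
          (fun p => by rw [mul_comm]; exact ih _)
        refine le_trans ?_ h1
        rw [PP_sub, PP_const hd0, PP_smul, mul_comm]
        have h2 : PP ww x ≤ ww x := by
          refine (ww_PP hd x).trans ?_
          have := ww_pos x
          have := nsq_nonneg x
          have h3 : 0 ≤ 1 / (48 * (nsq x + 400)) := by positivity
          nlinarith
        gcongr
      · exact hle1 x

lemma qq_far2 (hd : 3 ≤ d) {D K : Set (V d)} {N : ℕ} (hN : 16 ≤ N) (hK : K ⊆ cube 0 N) (T : ℕ) {x : V d}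
    (hx : x ∉ cube 0 ((4 * d + 8) * N)) : 1 / 2 ≤ qq D K T x := by
  refine le_trans ?_ (qq_far1 hd hN hK T x)
  have h1 := nsq_ge_of_not_cube hx
  rw [sub_zero] at h1
  have hdr : (3:ℝ) ≤ d := by exact_mod_cast hd
  have hNr : (16:ℝ) ≤ N := by exact_mod_cast hN
  set S := Real.sqrt (Real.sqrt (d * N ^ 2 + 400)) with hS
  have hS0 : 0 ≤ S := by positivity
  have hS4 : S ^ 4 = d * N ^ 2 + 400 := by
    rw [hS, show ∀ a : ℝ, a ^ 4 = (a ^ 2) ^ 2 by intro a; ring, Real.sq_sqrt (by positivity), Real.sq_sqrt (by positivity)]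
  have h2 : (2 * S) ^ 4 ≤ YY x ^ 4 := by
    rw [mul_pow, hS4, YY_pow]
    refine le_trans ?_ (add_le_add_left h1 _)
    push_cast
    nlinarith [mul_nonneg (show (0:ℝ) ≤ d by linarith) (sq_nonneg (N:ℝ)), mul_nonneg (sq_nonneg (d:ℝ)) (sq_nonneg (N:ℝ)), mul_le_mul hNr hNr (by norm_num) (by linarith)]
  have h3 : 2 * S ≤ YY x := le_of_pow_le_pow_left₀ (by norm_num) (YY_pos x).le h2
  have h4 : ww x * S ≤ 1 / 2 := by
    unfold ww
    rw [one_div, inv_mul_eq_div, div_le_iff₀ (YY_pos x)]; linarith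
  linarith

lemma qq_slab (hd : 3 ≤ d) {D K : Set (V d)} {N : ℕ} (hN : 16 ≤ N) (hK : K ⊆ cube 0 N) (i : Fin d) {s : ℤ}
    (hs : s = 1 ∨ s = -1) (T : ℕ) : ∀ x : V d, s * x i ≤ (4 * d + 8) * N + 1 →
    ((s:ℝ) * x i - N) / ((4 * d + 8) * N) / 2 ≤ qq D K T x := by
  have hd0 : 0 < d := by omega
  have hdr : (3:ℝ) ≤ d := by exact_mod_cast hd
  have hNr : (16:ℝ) ≤ N := by exact_mod_cast hN
  have hden : (0:ℝ) < (4 * d + 8) * N := by positivity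
  have hin : ∀ x ∈ K, ((s:ℝ) * x i - N) / ((4 * d + 8) * N) / 2 ≤ 0 := by
    intro x hx
    have h1 : |x i - 0| ≤ (N:ℤ) := hK hx i
    rw [sub_zero, abs_le] at h1
    have h2 : s * x i ≤ N := by rcases hs with rfl | rfl <;> linarith
    have h3 : (s:ℝ) * x i ≤ N := by exact_mod_cast h2
    have : ((s:ℝ) * x i - N) / ((4 * d + 8) * N) ≤ 0 := div_nonpos_of_nonpos_of_nonneg (by linarith) hden.le
    linarith
  have hle : ∀ x : V d, s * x i ≤ (4 * d + 8) * N + 1 → ((s:ℝ) * x i - N) / ((4 * d + 8) * N) / 2 ≤ 1 / 2 := by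
    intro x hx
    have h3 : (s:ℝ) * x i ≤ (4 * d + 8) * N + 1 := by exact_mod_cast hx
    have : ((s:ℝ) * x i - N) / ((4 * d + 8) * N) ≤ 1 := by rw [div_le_one hden]; linarith
    linarith
  have hbig : ∀ T, ∀ x : V d, s * x i = (4 * d + 8) * N + 1 → 1 / 2 ≤ qq D K T x := by
    intro T x hx
    refine qq_far2 hd hN hK T (fun hc => ?_)
    have h1 : |x i - 0| ≤ (((4 * d + 8) * N : ℕ) : ℤ) := hc i
    rw [sub_zero, abs_le] at h1
    push_cast at h1
    rcases hs with rfl | rfl <;> linarith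
  induction T with
  | zero =>
    intro x hx
    show _ ≤ (if x ∈ K then (0:ℝ) else 1)
    split
    · exact hin x (by assumption)
    · linarith [hle x hx]
  | succ T ih =>
    intro x hx
    by_cases hb : s * x i = (4 * d + 8) * N + 1
    · exact (hle x hx).trans (hbig _ x hb)
    show _ ≤ (if x ∈ K then (0:ℝ) else if x ∈ D then PP (qq D K T) x else 1)
    split
    · exact hin x (by assumption)
    · split
      · have h1 := PP_mono (f := fun x : V d => (s / ((4 * d + 8) * N) / 2) * (x i : ℝ) - N / ((4 * d + 8) * N) / 2) (g := qq D K T) (x := x)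
          (fun p => by
            have h2 := ih (x + stp p) (by
              have h4 := stp_apply_abs p i
              rw [abs_le] at h4
              have h5 : s * x i ≤ (4 * d + 8) * N := by
                have := lt_of_le_of_ne hx hb
                omega
              simp only [Pi.add_apply]
              rcases hs with rfl | rfl <;> linarith)
            refine le_trans (le_of_eq ?_) h2
            ring)
        refine le_trans (le_of_eq ?_) h1
        rw [PP_sub, PP_const hd0, PP_smul, PP_coord hd0]
        ring
      · linarith [hle x hx]

lemma qlim_far (hd : 3 ≤ d) {D K : Set (V d)} {N : ℕ} (hN : 16 ≤ N) (hK : K ⊆ cube 0 N) {x : V d}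
    (hx : x ∉ cube 0 (2 * N)) : 1 / (2 * (4 * (d:ℝ) + 8)) ≤ qlim D K x := by
  have hdr : (3:ℝ) ≤ d := by exact_mod_cast hd
  have hNr : (16:ℝ) ≤ N := by exact_mod_cast hN
  refine le_ciInf (fun T => ?_)
  simp only [cube, Set.mem_ofPred_eq, not_forall, not_le] at hx
  obtain ⟨i, hi⟩ := hx
  simp only [Pi.zero_apply, sub_zero] at hi
  push_cast at hi
  obtain ⟨s, hs, hsi⟩ : ∃ s : ℤ, (s = 1 ∨ s = -1) ∧ 2 * (N:ℤ) < s * x i := by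
    rcases lt_abs.1 hi with h | h
    · exact ⟨1, Or.inl rfl, by linarith⟩
    · exact ⟨-1, Or.inr rfl, by linarith⟩
  by_cases hc : s * x i ≤ (4 * d + 8) * N + 1
  · refine le_trans ?_ (qq_slab hd hN hK i hs T x hc)
    have h3 : 2 * (N:ℝ) < (s:ℝ) * x i := by exact_mod_cast hsi
    calc 1 / (2 * (4 * (d:ℝ) + 8)) = N / ((4 * d + 8) * N) / 2 := by field_simp
      _ ≤ _ := by gcongr; linarith
  · have h2 : 1 / 2 ≤ qq D K T x := by
      refine qq_far2 hd hN hK T (fun hc' => hc ?_)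
      have h1 : |x i - 0| ≤ (((4 * d + 8) * N : ℕ) : ℤ) := hc' i
      rw [sub_zero, abs_le] at h1
      push_cast at h1
      rcases hs with rfl | rfl <;> linarith
    refine le_trans ?_ h2
    apply one_div_le_one_div_of_le <;> linarith

/-- reflection comparison -/
lemma qlim_reflect (hd : 3 ≤ d) {D K : Set (V d)} {N n : ℕ} (hN : 16 ≤ N) (hD : cube 0 (4 * N) ⊆ D)
    (hK : K ⊆ cube 0 n) (i0 : Fin d) {s : ℤ} (hs : s = 1 ∨ s = -1) {h : ℕ} (hnh : n ≤ h) (hhN : h ≤ N) {y : V d}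
    (hy1 : s * y i0 < h) (hy2 : (h:ℤ) - 3 * N ≤ s * y i0) (hy3 : ∀ j, j ≠ i0 → |y j| ≤ 3 * N) :
    1 / (2 * (4 * (d:ℝ) + 8)) * qlim D K y ≤ qlim D K (refl' i0 (2 * (s * h)) y) := by
  have hd0 : 0 < d := by omega
  have hdr : (3:ℝ) ≤ d := by exact_mod_cast hd
  set c0 : ℝ := 1 / (2 * (4 * (d:ℝ) + 8)) with hc0
  have hc0p : 0 < c0 := by positivity
  have hc01 : c0 ≤ 1 := by rw [hc0, div_le_one (by positivity)]; linarith
  have hKN : K ⊆ cube 0 N := hK.trans (cube_mono (hnh.trans hhN))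
  set R : V d → V d := refl' i0 (2 * (s * h)) with hR
  have hss : s * s = 1 := by rcases hs with rfl | rfl <;> norm_num
  have hRs : ∀ y : V d, s * R y i0 = 2 * h - s * y i0 := by
    intro y; rw [hR, refl'_same]
    rcases hs with rfl | rfl <;> ring
  have hRj : ∀ (y : V d) j, j ≠ i0 → R y j = y j := fun y j hj => refl'_ne hj _ _
  set Ω : Set (V d) := {y | s * y i0 < h ∧ (h:ℤ) - 3 * N ≤ s * y i0 ∧ ∀ j, j ≠ i0 → |y j| ≤ 3 * N} with hΩ
  have habs : ∀ a : ℤ, ∀ b : ℤ, |s * a| ≤ b → |a| ≤ b := by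
    intro a b hab
    rcases hs with rfl | rfl <;> simpa using hab
  have hΩ4 : Ω ⊆ cube 0 (4 * N) := by
    rintro y ⟨h1, h2, h3⟩ j
    simp only [Pi.zero_apply, sub_zero]
    by_cases hj : j = i0
    · subst hj
      apply habs; rw [abs_le]; push_cast; constructor <;> omega
    · have := h3 j hj; push_cast; linarith
  have hR4 : ∀ y ∈ Ω, R y ∈ cube 0 (4 * N) := by
    rintro y ⟨h1, h2, h3⟩ j
    simp only [Pi.zero_apply, sub_zero]
    by_cases hj : j = i0
    · subst hj
      apply habs; rw [hRs, abs_le]; push_cast; constructor <;> omega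
    · rw [hRj y j hj]; have := h3 j hj; push_cast; linarith
  have hKs : ∀ x : V d, (n:ℤ) < s * x i0 → x ∉ K := by
    intro x hx hxK
    have h1 : |x i0 - 0| ≤ (n:ℤ) := hK hxK i0
    rw [sub_zero, abs_le] at h1
    rcases hs with rfl | rfl <;> linarith
  have key : ∀ y ∈ Ω, 0 ≤ qlim D K (R y) - c0 * qlim D K y := by
    refine min_principle hd0 (G := fun y => qlim D K (R y) - c0 * qlim D K y) ((cube_finite 0 (4 * N)).subset hΩ4) ?_ ?_
    · intro y hy
      have h1 : qlim D K (R y) = PP (qlim D K) (R y) := by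
        refine qlim_harm hd0 D K (hKs _ ?_) (hD (hR4 y hy))
        rw [hRs]; have := hy.1; omega
      rw [PP_sub, PP_smul, PP_refl', ← hR, ← h1]
      have h2 := qlim_sub hd0 D K (hD (hΩ4 hy))
      have := mul_le_mul_of_nonneg_left h2 hc0p.le
      linarith
    · intro y hy _ p hp
      have h4 := stp_apply_abs p i0
      rw [abs_le] at h4
      obtain ⟨h1, h2, h3⟩ := hy
      have hq0 := qlim_nonneg hd0 D K (y + stp p)
      have hq1 := qlim_le_one hd0 D K (y + stp p)
      set y' := y + stp p with hy'
      have hsy' : s * y' i0 ≤ h := by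
        rw [hy', Pi.add_apply]
        rcases hs with rfl | rfl <;> linarith
      have hfar : R y' ∉ cube 0 (2 * N) → 0 ≤ qlim D K (R y') - c0 * qlim D K y' := by
        intro h5
        have := qlim_far hd (D := D) hN hKN h5
        rw [← hc0] at this
        nlinarith
      by_cases e1 : s * y' i0 = h
      · have e2 : R y' = y' := by
          funext j
          by_cases hj : j = i0
          · subst hj
            have h5 := hRs y'
            have h6 : s * R y' j = s * y' j := by linarith
            rcases hs with rfl | rfl <;> linarith
          · exact hRj _ _ hj
        rw [e2]; nlinarith
      · by_cases e2 : (h:ℤ) - 3 * N ≤ s * y' i0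
        · have : ∃ j, j ≠ i0 ∧ 3 * (N:ℤ) < |y' j| := by
            by_contra hcon
            push Not at hcon
            exact hp ⟨lt_of_le_of_ne hsy' e1, e2, hcon⟩
          obtain ⟨j, hj, hjN⟩ := this
          apply hfar
          intro hc
          have h5 : |R y' j - 0| ≤ ((2 * N : ℕ) : ℤ) := hc j
          rw [hRj _ _ hj, sub_zero] at h5
          push_cast at h5
          omega
        · apply hfar
          intro hc
          have h5 : |R y' i0 - 0| ≤ ((2 * N : ℕ) : ℤ) := hc i0
          rw [sub_zero, abs_le] at h5
          push_cast at h5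
          have h6 := hRs y'
          rcases hs with rfl | rfl <;> omega
  have := key y ⟨hy1, hy2, hy3⟩
  linarith

/-- step in direction `s e_{i0}` -/
def sdir (i0 : Fin d) (s : ℤ) : Fin d × Bool := (i0, decide (s = 1))

lemma stp_sdir (i0 : Fin d) {s : ℤ} (hs : s = 1 ∨ s = -1) : stp (sdir i0 s) = Pi.single i0 s := by
  rcases hs with rfl | rfl
  · simp [stp, sdir]
  · simp [stp, sdir, Pi.single_neg]

/-- positivity -/
lemma qlim_pos (hd : 3 ≤ d) {D K : Set (V d)} {N n : ℕ} (hN : 16 ≤ N) (hD : cube 0 (4 * N) ⊆ D)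
    (hK : K ⊆ cube 0 n) (hnN : n ≤ N) (i0 : Fin d) {s : ℤ} (hs : s = 1 ∨ s = -1) (k : ℕ) : ∀ x : V d,
    (n:ℤ) < s * x i0 → 2 * (N:ℤ) < s * x i0 + k → 0 < qlim D K x := by
  have hd0 : 0 < d := by omega
  have hdr : (3:ℝ) ≤ d := by exact_mod_cast hd
  have hc0p : 0 < 1 / (2 * (4 * (d:ℝ) + 8)) := by positivity
  induction k with
  | zero =>
    intro x _ hx2
    refine lt_of_lt_of_le hc0p (qlim_far hd hN (hK.trans (cube_mono hnN)) ?_)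
    intro hc
    have h5 : |x i0 - 0| ≤ ((2 * N : ℕ) : ℤ) := hc i0
    rw [sub_zero, abs_le] at h5
    push_cast at h5 hx2
    rcases hs with rfl | rfl <;> linarith
  | succ k ih =>
    intro x hx1 hx2
    by_cases hc : x ∈ cube 0 (2 * N)
    · have hxK : x ∉ K := by
        intro hxK
        have h1 : |x i0 - 0| ≤ (n:ℤ) := hK hxK i0
        rw [sub_zero, abs_le] at h1
        rcases hs with rfl | rfl <;> linarith
      rw [qlim_harm hd0 D K hxK (hD (cube_mono (by omega) hc))]
      have h1 := PP_ge_single hd0 (f := qlim D K) (x := x) (fun p => qlim_nonneg hd0 D K _) (sdir i0 s)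
      have e : s * (x + stp (sdir i0 s)) i0 = s * x i0 + 1 := by
        rw [stp_sdir i0 hs, Pi.add_apply, Pi.single_eq_same]
        rcases hs with rfl | rfl <;> ring
      have h2 := ih (x + stp (sdir i0 s)) (by rw [e]; linarith) (by rw [e]; push_cast at hx2; linarith)
      by_contra h3
      have : 2 * (d:ℝ) * PP (qlim D K) x ≤ 0 := mul_nonpos_of_nonneg_of_nonpos (by positivity) (by linarith)
      linarith
    · exact lt_of_lt_of_le hc0p (qlim_far hd hN (hK.trans (cube_mono hnN)) hc)

lemma gg_sub_mono (hd : 3 ≤ d) {U W : Set (V d)} (h : U ⊆ W) (x0 y : V d) : gg U x0 y ≤ gg W x0 y :=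
  Summable.tsum_le_tsum (fun t => TU_pow_sub_mono h (ind_nonneg y) t x0) (aa_summable hd U x0 y) (aa_summable hd W x0 y)

lemma duhamel (hd : 3 ≤ d) {U B : Set (V d)} (hUB : U ⊆ B) (hB : B.Finite) {f : V d → ℝ} {κ : ℝ} (hκ : 0 ≤ κ) (F : Finset (V d))
    (hf : ∀ x ∈ B, f x ≤ TU U f x + κ * (if x ∈ F then 1 else 0)) {x0 : V d} (hx0 : x0 ∈ B) :
    f x0 ≤ κ * ∑ y ∈ F, gg U x0 y := by
  set g : V d → ℝ := κ • ∑ y ∈ F, ind y with hg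
  have gx : ∀ x, g x = κ * (if x ∈ F then 1 else 0) := by
    intro x
    simp only [hg, Pi.smul_apply, smul_eq_mul, Finset.sum_apply, ind]
    congr 1
    rw [Finset.sum_ite_eq]
  have step : ∀ T : ℕ, ∀ x ∈ B, f x ≤ ((TU U) ^ T) f x + ∑ t ∈ Finset.range T, ((TU U) ^ t) g x := by
    intro T
    induction T with
    | zero => intro x _; simp
    | succ T ih =>
      intro x hx
      have h1 := hf x hx
      have h2 := TU_mono (U := U) (f := f) (g := fun x => ((TU U) ^ T) f x + ∑ t ∈ Finset.range T, ((TU U) ^ t) g x)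
        (fun y hy => ih y (hUB hy)) x
      have h3 : TU U (fun x => ((TU U) ^ T) f x + ∑ t ∈ Finset.range T, ((TU U) ^ t) g x) x
          = ((TU U) ^ (T+1)) f x + ∑ t ∈ Finset.range T, ((TU U) ^ (t+1)) g x := by
        have e : (fun x => ((TU U) ^ T) f x + ∑ t ∈ Finset.range T, ((TU U) ^ t) g x)
          = ((TU U) ^ T) f + ∑ t ∈ Finset.range T, ((TU U) ^ t) g := by
          funext x; simp
        rw [e, map_add, map_sum]
        simp only [Pi.add_apply, Finset.sum_apply, pow_succ', Module.End.mul_apply]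
      rw [Finset.sum_range_succ' (fun t => ((TU U) ^ t) g x)]
      have h4 : ((TU U) ^ 0) g x = κ * (if x ∈ F then 1 else 0) := by rw [pow_zero]; exact gx x
      rw [h4]
      linarith
  have hsum : ∀ t, ((TU U) ^ t) g x0 = κ * ∑ y ∈ F, aa U x0 t y := by
    intro t
    rw [hg, map_smul, map_sum]
    simp [aa]
  have hle : ∀ T, ∑ t ∈ Finset.range T, ((TU U) ^ t) g x0 ≤ κ * ∑ y ∈ F, gg U x0 y := by
    intro T
    simp only [hsum]
    rw [← Finset.mul_sum, Finset.sum_comm]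
    refine mul_le_mul_of_nonneg_left (Finset.sum_le_sum (fun y _ => ?_)) hκ
    exact (aa_summable hd U x0 y).sum_le_tsum _ (fun t _ => aa_nonneg U x0 t y)
  obtain ⟨M, hM⟩ : ∃ M : ℝ, ∀ y ∈ B, f y ≤ M := by
    obtain ⟨M, hM⟩ := (hB.image f).bddAbove
    exact ⟨M, fun y hy => hM (Set.mem_image_of_mem _ hy)⟩
  set iB : V d → ℝ := fun x => if x ∈ B then 1 else 0 with hiB
  have hlim : Filter.Tendsto (fun T => M * ((TU U) ^ (T+1)) iB x0) Filter.atTop (nhds (M * 0)) := by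
    refine Filter.Tendsto.const_mul _ ?_
    have := (TU_sum_finite hd U (f := iB) (fun x => by simp only [hiB]; split <;> norm_num) hB (fun x hx => by simp [hiB, hx]) x0).tendsto_atTop_zero
    exact (Filter.tendsto_add_atTop_iff_nat 1).2 this
  have hfin : ∀ T : ℕ, f x0 - κ * ∑ y ∈ F, gg U x0 y ≤ M * ((TU U) ^ (T+1)) iB x0 := by
    intro T
    have h1 := step (T+1) x0 hx0
    have h2 := hle (T+1)
    have h3 : ((TU U) ^ (T+1)) f x0 ≤ M * ((TU U) ^ (T+1)) iB x0 := by
      have e : M * ((TU U) ^ (T+1)) iB x0 = ((TU U) ^ (T+1)) (M • iB) x0 := by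
        rw [map_smul]; rfl
      rw [e, pow_succ, Module.End.mul_apply, Module.End.mul_apply]
      refine TU_pow_mono T (fun x => TU_mono (fun y hy => ?_) x) x0
      have := hM y (hUB hy)
      simpa [hiB, hUB hy] using this
    linarith
  have := ge_of_tendsto' hlim hfin
  linarith

lemma aa_line (hd : 0 < d) {U : Set (V d)} {x0 : V d} {p : Fin d × Bool} (k : ℕ) (h : ∀ j : ℕ, 1 ≤ j → j ≤ k → x0 + (j:ℤ) • stp p ∈ U) :
    ((1:ℝ) / (2 * d)) ^ k ≤ aa U x0 k (x0 + (k:ℤ) • stp p) := by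
  induction k with
  | zero => simp [aa_zero]
  | succ k ih =>
    have ih' := ih (fun j h1 h2 => h j h1 (by omega))
    have hk := h (k+1) (by omega) le_rfl
    rw [aa_succ, if_pos hk]
    have h1 := PP_ge_single (f := aa U x0 k) (x := x0 + ((k+1:ℕ):ℤ) • stp p) hd (fun p => aa_nonneg U x0 k _) (p.1, !p.2)
    have e : x0 + ((k+1:ℕ):ℤ) • stp p + stp (p.1, !p.2) = x0 + (k:ℤ) • stp p := by
      rw [stp_neg]; push_cast; rw [add_smul, one_smul]; abel
    rw [e] at h1
    have hd' : (0:ℝ) < d := by exact_mod_cast hd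
    have h2 : (0:ℝ) < 2 * d := by positivity
    rw [pow_succ, mul_one_div, div_le_iff₀ h2]
    linarith

/-- Analytic core, large scale. -/
lemma core_large (hd : 3 ≤ d) {m : ℕ} (hm : 8 * (d:ℝ) ≤ (m:ℝ)^2) {D K : Set (V d)} {x0 z' : V d} (hz' : nsq (x0 - z') = (m:ℝ)^2)
    (hBD : ∀ x, nsq (x - z') ≤ 4 * (m:ℝ)^2 → x ∈ D) (hK : ∀ x ∈ K, (m:ℝ)^2 ≤ nsq (x - z')) {Q : ℝ} (hQ0 : 0 ≤ Q)
    (hQ : ∀ x, nsq (x - z') ≤ 4 * (m:ℝ)^2 → ∀ p, qlim D K (x + stp p) ≤ Q)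
    (F : Finset (V d)) (hF : ∀ x, nsq (x - z') < (m:ℝ)^2/4 → x ∈ F) :
    (Real.exp (-(4*d)) - Real.exp (-(16*d))) * PP (qlim D K) x0 ≤ Q * (4 * d / (m:ℝ)^2) * ∑ y ∈ F, gg (D \ K) x0 y := by
  have hd0 : 0 < d := by omega
  have hdR : (3:ℝ) ≤ d := by exact_mod_cast hd
  have hm0 : (0:ℝ) < (m:ℝ)^2 := by linarith
  set r : ℝ := (m:ℝ)/2 with hr
  have hr2 : r^2 = (m:ℝ)^2/4 := by rw [hr]; ring
  set l : ℝ := (d:ℝ)/r^2 with hl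
  have hl' : l = 4 * d / (m:ℝ)^2 := by rw [hl, hr2]; field_simp
  have hl0 : 0 ≤ l := by rw [hl']; positivity
  rw [← hl']
  set ψ := Real.exp (-(4*d)) - Real.exp (-(16*d)) with hψ
  have hψ0 : 0 ≤ ψ := by
    rw [hψ, sub_nonneg]; exact Real.exp_le_exp.2 (by linarith)
  set B : Set (V d) := {x | nsq (x - z') ≤ 4 * (m:ℝ)^2} with hB
  have hBfin : B.Finite := by
    refine (cube_finite z' (2*m)).subset (fun x hx => ?_)
    by_contra hc
    have hx' : nsq (x - z') ≤ 4 * (m:ℝ)^2 := hx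
    simp only [cube, Set.mem_ofPred_eq, not_forall, not_le] at hc
    obtain ⟨i, hi⟩ := hc
    have h1 := sq_le_nsq (x - z') i
    have h2 : ((2*m:ℕ):ℝ) < |((x - z') i : ℝ)| := by
      have : ((2*m:ℕ):ℤ) < |(x - z') i| := by simpa using hi
      exact_mod_cast this
    have h3 : ((2*m:ℕ):ℝ)^2 < |((x - z') i : ℝ)|^2 := by gcongr
    rw [sq_abs] at h3
    push_cast at h3
    nlinarith
  set U : Set (V d) := B \ K with hU
  set Θ : V d → ℝ := fun x => Q * (gau l z' x - Real.exp (-(4*d))) + ψ * PP (qlim D K) x with hΘ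
  have key := duhamel hd (U := U) (B := B) Set.sdiff_subset hBfin (f := Θ) (κ := Q * l) (by positivity) F ?_ (x0 := x0) ?_
  · have e1 : Θ x0 = ψ * PP (qlim D K) x0 := by
      simp only [hΘ, gau, hz', hl']
      have : -(4 * (d:ℝ) / (m:ℝ)^2) * (m:ℝ)^2 = -(4*d) := by rw [neg_mul, div_mul_cancel₀ _ hm0.ne']
      rw [this]; ring
    rw [e1] at key
    refine key.trans (mul_le_mul_of_nonneg_left (Finset.sum_le_sum (fun y _ => gg_sub_mono hd ?_ x0 y)) (by positivity))
    exact fun x hx => ⟨hBD x hx.1, hx.2⟩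
  · intro x hx
    have hx' : nsq (x - z') ≤ 4 * (m:ℝ)^2 := hx
    have h1 : gau l z' x ≤ PP (gau l z') x + l * (if x ∈ F then 1 else 0) := by
      by_cases hc : nsq (x - z') < (m:ℝ)^2/4
      · rw [if_pos (hF x hc), mul_one]; exact gau_sub hd0 hl0 z' x
      · have := gau_subharm hd0 (r := r) (by rw [hr2]; linarith) z' x (by rw [hr2]; linarith)
        have h2 : 0 ≤ l * (if x ∈ F then (1:ℝ) else 0) := by split <;> simp [hl0]
        linarith
    have h2 : PP (fun y => Q * (gau l z' y - Real.exp (-(4*d))) + ψ * qlim D K y) x ≤ TU U Θ x := by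
      rw [TU_apply]
      refine PP_mono (fun p => ?_)
      by_cases hyK : x + stp p ∈ K
      · have : x + stp p ∉ U := fun h => h.2 hyK
        rw [if_neg this, qlim_K hd0 D K hyK, mul_zero, add_zero]
        refine mul_nonpos_of_nonneg_of_nonpos hQ0 ?_
        rw [sub_nonpos, gau]
        refine Real.exp_le_exp.2 ?_
        have := hK _ hyK
        rw [hl', neg_mul, neg_le_neg_iff, div_mul_eq_mul_div, le_div_iff₀ hm0]
        gcongr
      · by_cases hyB : x + stp p ∈ B
        · rw [if_pos ⟨hyB, hyK⟩]
          simp only [hΘ]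
          rw [← qlim_harm hd0 D K hyK (hBD _ hyB)]
        · have : x + stp p ∉ U := fun h => hyB h.1
          rw [if_neg this]
          have h3 := hQ x hx' p
          have h4 : gau l z' (x + stp p) ≤ Real.exp (-(16*d)) := by
            have h5 : 4 * (m:ℝ)^2 < nsq (x + stp p - z') := by
              by_contra hc; exact hyB (not_lt.1 hc)
            rw [gau]
            refine Real.exp_le_exp.2 ?_
            rw [hl', neg_mul, neg_le_neg_iff, div_mul_eq_mul_div, le_div_iff₀ hm0]
            nlinarith
          have h6 : Q * (gau l z' (x + stp p) - Real.exp (-(4*d))) ≤ Q * (-ψ) := by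
            refine mul_le_mul_of_nonneg_left ?_ hQ0
            rw [hψ]; linarith
          have h7 : ψ * qlim D K (x + stp p) ≤ ψ * Q := mul_le_mul_of_nonneg_left h3 hψ0
          linarith
    have h3 : PP (fun y => Q * (gau l z' y - Real.exp (-(4*d))) + ψ * qlim D K y) x
       = Q * (PP (gau l z') x - Real.exp (-(4*d))) + ψ * PP (qlim D K) x := by
      unfold PP
      have hc := PP_const hd0 (Real.exp (-(4*d))) x
      unfold PP at hc
      rw [Finset.sum_add_distrib, ← Finset.mul_sum, ← Finset.mul_sum, Finset.sum_sub_distrib]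
      set E := Real.exp (-(4*(d:ℝ)))
      set S := ∑ p : Fin d × Bool, E
      have hc' : S / (2 * (d:ℝ)) = E := hc
      linear_combination (-Q) * hc'
    rw [h3] at h2
    have h4 : Q * gau l z' x ≤ Q * (PP (gau l z') x + l * (if x ∈ F then 1 else 0)) := mul_le_mul_of_nonneg_left h1 hQ0
    simp only [hΘ] at h2 ⊢
    linarith
  · show nsq (x0 - z') ≤ 4 * (m:ℝ)^2
    rw [hz']; linarith

lemma abs_of_sgn {s a : ℤ} (hs : s = 1 ∨ s = -1) : |a| = |s * a| := by
  rcases hs with rfl | rfl <;> simp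

lemma box_inst (hd : 0 < d) : ∃ C : ℝ, 1 ≤ C ∧ ∀ (N n m : ℕ) (x0 : V d) (i0 : Fin d) (s : ℤ), (s = 1 ∨ s = -1) →
    2 ≤ m → 8 * m ≤ n → n + m ≤ N → x0 ∈ cube 0 n → ∀ u : V d → ℝ, (∀ x, 0 ≤ u x) →
    (∀ y ∈ cube 0 (4*N), (n:ℤ) < s * y i0 → u y = PP u y) →
    ∀ x x' : V d, (n + (m/8 - 1 + 1 : ℕ) : ℤ) ≤ s * x i0 → s * x i0 ≤ n + (m/8 - 1 + 1 : ℕ) + 6 * m → (∀ i ≠ i0, |x i - x0 i| ≤ 6 * m) →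
     (n + (m/8 - 1 + 1 : ℕ) : ℤ) ≤ s * x' i0 → s * x' i0 ≤ n + (m/8 - 1 + 1 : ℕ) + 6 * m → (∀ i ≠ i0, |x' i - x0 i| ≤ 6 * m) →
     u x ≤ C * u x' := by
  obtain ⟨C, hC, H⟩ := box_harnack hd 192
  refine ⟨C, hC, ?_⟩
  intro N n m x0 i0 s hs hm hmn hN hx0 u hu hh x x' a1 a2 a3 b1 b2 b3
  set ρ : ℕ := m/8 - 1 with hρ
  have hρ1 : ρ + 1 ≤ m := by omega
  have hρ2 : m ≤ 16 * (ρ + 1) := by omega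
  clear_value ρ
  set lo : V d := fun i => if i = i0 then s * (n + (ρ + 1 : ℕ) + 3 * m) - 3 * m else x0 i - 6 * m with hlo
  set hi : V d := fun i => if i = i0 then s * (n + (ρ + 1 : ℕ) + 3 * m) + 3 * m else x0 i + 6 * m with hhi
  have mem : ∀ y : V d, y ∈ Set.Icc lo hi ↔ ((n + (ρ + 1 : ℕ) : ℤ) ≤ s * y i0 ∧ s * y i0 ≤ n + (ρ + 1 : ℕ) + 6 * m ∧ (∀ i ≠ i0, |y i - x0 i| ≤ 6 * m)) := by
    intro y
    rw [Set.mem_Icc, Pi.le_def, Pi.le_def]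
    constructor
    · rintro ⟨h1, h2⟩
      have h3 := h1 i0
      have h4 := h2 i0
      simp only [hlo, hhi, if_true] at h3 h4
      refine ⟨?_, ?_, ?_⟩
      · rcases hs with rfl | rfl <;> push_cast at * <;> linarith
      · rcases hs with rfl | rfl <;> push_cast at * <;> linarith
      · intro i hi'
        have h5 := h1 i
        have h6 := h2 i
        simp only [hlo, hhi, if_neg hi'] at h5 h6
        rw [abs_le]; constructor <;> linarith
    · rintro ⟨h1, h2, h3⟩
      constructor
      · intro i
        by_cases hi' : i = i0
        · subst hi'
          simp only [hlo, if_true]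
          rcases hs with rfl | rfl <;> push_cast at * <;> linarith
        · simp only [hlo, if_neg hi']
          have := abs_le.1 (h3 i hi')
          linarith [this.1]
      · intro i
        by_cases hi' : i = i0
        · subst hi'
          simp only [hhi, if_true]
          rcases hs with rfl | rfl <;> push_cast at * <;> linarith
        · simp only [hhi, if_neg hi']
          have := abs_le.1 (h3 i hi')
          linarith [this.2]
  refine H u hu lo hi ρ ?_ x ((mem x).2 ⟨a1, a2, a3⟩) x' ((mem x').2 ⟨b1, b2, b3⟩) ?_
  · intro x hx y hy
    obtain ⟨h1, h2, h3⟩ := (mem x).1 hx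
    have hy0 := hy i0
    have hy0' : |s * y i0 - s * x i0| ≤ ρ := by
      rw [← mul_sub, ← abs_of_sgn hs]; exact hy0
    rw [abs_le] at hy0'
    refine hh y ?_ ?_
    · intro i
      rw [Pi.zero_apply, sub_zero]
      by_cases hi' : i = i0
      · subst hi'
        rw [abs_of_sgn hs, abs_le]
        push_cast at *
        constructor <;> linarith
      · have h4 := h3 i hi'
        have h5 := hx0 i
        have h6 := hy i
        rw [Pi.zero_apply, sub_zero] at h5
        rw [abs_le] at *
        push_cast at *
        constructor <;> linarith
    · push_cast at *; linarith
  · intro i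
    by_cases hi' : i = i0
    · subst hi'
      rw [abs_of_sgn hs, mul_sub, abs_le]
      push_cast at *
      constructor <;> linarith
    · have h4 := a3 i hi'
      have h5 := b3 i hi'
      rw [abs_le] at *
      push_cast at *
      constructor <;> linarith

lemma cube_card (c : V d) (r : ℕ) : (cube_finite c r).toFinset.card = (2 * r + 1) ^ d := by
  have e : (cube_finite c r).toFinset = Finset.Icc (fun i => c i - r) (fun i => c i + r) := by
    ext y
    rw [Set.Finite.mem_toFinset, Finset.mem_Icc, Pi.le_def, Pi.le_def]
    simp only [cube, Set.mem_ofPred_eq, abs_le]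
    constructor
    · intro h; exact ⟨fun i => by linarith [(h i).1], fun i => by linarith [(h i).2]⟩
    · rintro ⟨h1, h2⟩ i; exact ⟨by linarith [h1 i], by linarith [h2 i]⟩
  rw [e, Pi.card_Icc]
  have : ∀ i : Fin d, (Finset.Icc (c i - r) (c i + r)).card = 2 * r + 1 := by
    intro i
    rw [Int.card_Icc]; omega
  simp [this]

set_option maxHeartbeats 1000000 in
lemma core (hd : 3 ≤ d) : ∃ c : ℝ, 0 < c ∧ ∀ (N n m : ℕ) (D K : Set (V d)) (x0 : V d) (i0 : Fin d) (s : ℤ), (s = 1 ∨ s = -1) →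
    2 ≤ m → 8 * m ≤ n → 16 ≤ n → n + m ≤ N → cube 0 (4*N) ⊆ D → K ⊆ cube 0 n → x0 ∈ K → s * x0 i0 = n →
    ∀ z ∈ cube (x0 + ((m/2 : ℕ) : ℤ) • Pi.single i0 s) (m/4),
      c * (m:ℝ) ^ ((2:ℤ) - (d:ℤ)) * PP (qlim D K) x0 ≤ gg (D \ K) x0 z * qlim D K z := by
  have hd0 : 0 < d := by omega
  have hdR : (3:ℝ) ≤ d := by exact_mod_cast hd
  obtain ⟨C, hC, H⟩ := box_inst hd0
  set c0 : ℝ := 1/(2*(4*(d:ℝ)+8)) with hc0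
  have hc0p : 0 < c0 := by rw [hc0]; positivity
  have hc01 : c0 ≤ 1 := by
    rw [hc0, div_le_one (by positivity)]; linarith
  set ψ := Real.exp (-(4*(d:ℝ))) - Real.exp (-(16*(d:ℝ))) with hψ
  have hψ0 : 0 < ψ := by
    rw [hψ, sub_pos]; exact Real.exp_lt_exp.2 (by linarith)
  set E1 : ℝ := C * C / c0 * (4 * d) * 2 ^ d / ψ with hE1
  set E2 : ℝ := C * C / c0 * (2 * d) ^ (8 * d) with hE2
  have hE1p : 0 < E1 := by rw [hE1]; positivity
  have hE2p : 0 < E2 := by rw [hE2]; positivity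
  refine ⟨min (1/E1) (1/E2), by positivity, ?_⟩
  intro N n m D K x0 i0 s hs hm hmn hn hN hD hK hx0K hx0 z hz
  have hx0c : x0 ∈ cube 0 n := hK hx0K
  have hss : s * s = 1 := by rcases hs with rfl | rfl <;> rfl
  have hU : ∀ y ∈ cube 0 (4*N), (n:ℤ) < s * y i0 → y ∈ D ∧ y ∉ K := by
    intro y hy hny
    refine ⟨hD hy, fun hyK => ?_⟩
    have := hK hyK i0
    rw [Pi.zero_apply, sub_zero, abs_of_sgn hs, abs_le] at this
    linarith [this.2]
  have Hq := H N n m x0 i0 s hs hm hmn hN hx0c (qlim D K) (qlim_nonneg hd0 D K)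
    (fun y hy hny => qlim_harm hd0 D K (hU y hy hny).2 (hU y hy hny).1)
  have Hg := H N n m x0 i0 s hs hm hmn hN hx0c (gg (D \ K) x0) (gg_nonneg _ _)
    (fun y hy hny => gg_harm hd _ x0 ⟨(hU y hy hny).1, (hU y hy hny).2⟩ (by rintro rfl; exact (hU y hy hny).2 hx0K))
  clear H
  have hMle : ((m/8 - 1 + 1 : ℕ) : ℤ) ≤ ((m/2:ℕ):ℤ) - ((m/4:ℕ):ℤ) := by omega
  have hMle' : 2 * ((m/8 - 1 + 1 : ℕ) : ℤ) ≤ m := by omega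
  have hM0 : 1 ≤ ((m/8 - 1 + 1 : ℕ) : ℤ) := by omega
  generalize ((m/8 - 1 + 1 : ℕ) : ℤ) = M at *
  -- z in box
  have hzi : ∀ i ≠ i0, |z i - x0 i| ≤ 6 * m := by
    intro i hi
    have := hz i
    rw [Pi.add_apply, Pi.smul_apply, Pi.single_eq_of_ne hi, smul_zero, add_zero] at this
    refine this.trans ?_
    omega
  have hz0 : |s * z i0 - (n + (m/2:ℕ))| ≤ (m/4:ℕ) := by
    have := hz i0
    rw [Pi.add_apply, Pi.smul_apply, Pi.single_eq_same, abs_of_sgn hs, smul_eq_mul] at this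
    have e : s * (z i0 - (x0 i0 + ((m/2:ℕ):ℤ) * s)) = s * z i0 - (s * x0 i0 + ((m/2:ℕ):ℤ) * (s * s)) := by ring
    rw [e, hss, hx0, mul_one] at this
    exact this
  rw [abs_le] at hz0
  have hz1 : (n:ℤ) + M ≤ s * z i0 := by linarith [hz0.1]
  have hz2 : s * z i0 ≤ n + M + 6 * m := by
    have h1 := hz0.2
    omega
  -- z'
  set z' : V d := x0 + (m:ℤ) • Pi.single i0 s with hz'
  have hz'0 : s * z' i0 = n + m := by
    rw [hz', Pi.add_apply, Pi.smul_apply, Pi.single_eq_same, smul_eq_mul]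
    linear_combination hx0 + (m:ℤ) * hss
  have hz'i : ∀ i ≠ i0, z' i = x0 i := by
    intro i hi
    rw [hz', Pi.add_apply, Pi.smul_apply, Pi.single_eq_of_ne hi, smul_zero, add_zero]
  have hnz' : nsq (x0 - z') = (m:ℝ)^2 := by
    unfold nsq
    rw [Finset.sum_eq_single i0]
    · have : (x0 - z') i0 = -(m * s) := by
        rw [hz', Pi.sub_apply, Pi.add_apply, Pi.smul_apply, Pi.single_eq_same, smul_eq_mul]; ring
      rw [this]
      have h2 : (s:ℝ) * s = 1 := by exact_mod_cast hss
      push_cast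
      linear_combination (m:ℝ)^2 * h2
    · intro i _ hi
      rw [Pi.sub_apply, hz'i i hi]; simp
    · simp
  have hz'g : gg (D \ K) x0 z' ≤ C * gg (D \ K) x0 z := by
    refine Hg z' z ?_ ?_ ?_ hz1 hz2 hzi
    · rw [hz'0]; linarith
    · rw [hz'0]; linarith
    · intro i hi
      rw [hz'i i hi]; simp
  -- coordinate bounds
  have coord : ∀ (x : V d) (r : ℕ), nsq (x - z') ≤ (r:ℝ)^2 → ∀ i, |x i - z' i| ≤ r := by
    intro x r hx i
    have h1 := (sq_le_nsq (x - z') i).trans hx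
    have h2 := abs_le_of_sq_le_sq h1 (by positivity)
    have h3 : |((x - z') i : ℝ)| ≤ r := h2
    have h4 : |x i - z' i| ≤ (r:ℤ) := by exact_mod_cast h3
    exact h4
  have hBD : ∀ x, nsq (x - z') ≤ 4 * (m:ℝ)^2 → x ∈ D := by
    intro x hx
    have hx' := coord x (2*m) (by push_cast; linarith)
    refine hD (fun i => ?_)
    have h1 := hx' i
    rw [Pi.zero_apply, sub_zero]
    by_cases hi : i = i0
    · subst hi
      rw [abs_of_sgn hs, mul_sub, hz'0, abs_le] at h1
      rw [abs_of_sgn hs, abs_le]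
      push_cast at *
      constructor <;> linarith
    · have h2 := hx0c i
      rw [hz'i i hi] at h1
      rw [Pi.zero_apply, sub_zero] at h2
      rw [abs_le] at *
      push_cast at *
      constructor <;> linarith
  set Q : ℝ := C / c0 * qlim D K z with hQ
  have hqz := qlim_nonneg hd0 D K z
  have hQ0 : 0 ≤ Q := by rw [hQ]; positivity
  have hQb : ∀ x, nsq (x - z') ≤ 4 * (m:ℝ)^2 → ∀ p, qlim D K (x + stp p) ≤ Q := by
    intro x hx p
    have hx' := coord x (2*m) (by push_cast; linarith)
    set y := x + stp p with hy
    have hyi : ∀ i, |y i - z' i| ≤ 2 * m + 1 := by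
      intro i
      have h1 := hx' i
      have h2 : |stp p i| ≤ 1 := stp_apply_abs p i
      have h3 : y i = x i + stp p i := rfl
      rw [h3]
      rw [abs_le] at *
      push_cast at *
      constructor <;> linarith
    have hy0 := hyi i0
    rw [abs_of_sgn hs, mul_sub, hz'0, abs_le] at hy0
    have hyj : ∀ i ≠ i0, |y i - x0 i| ≤ 6 * m := by
      intro i hi
      have := hyi i
      rw [hz'i i hi] at this
      refine this.trans ?_
      linarith
    rw [hQ, div_mul_eq_mul_div, le_div_iff₀ hc0p]
    have hqy := qlim_nonneg hd0 D K y
    by_cases hc : (n:ℤ) + m ≤ s * y i0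
    · have := Hq y z (by linarith) (by linarith) hyj hz1 hz2 hzi
      nlinarith
    · push Not at hc
      have h1 := qlim_reflect hd (by omega) hD hK i0 hs (h := n + m) (by omega) hN (y := y) (by push_cast; exact hc)
        (by push_cast; linarith) ?_
      · rw [← hc0, mul_comm] at h1
        refine h1.trans (Hq _ z ?_ ?_ ?_ hz1 hz2 hzi)
        · rw [refl'_same]
          have e : s * (2 * (s * ((n + m : ℕ):ℤ)) - y i0) = 2 * (n + m) - s * y i0 := by
            push_cast; linear_combination 2 * ((n:ℤ) + m) * hss
          rw [e]; linarith
        · rw [refl'_same]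
          have e : s * (2 * (s * ((n + m : ℕ):ℤ)) - y i0) = 2 * (n + m) - s * y i0 := by
            push_cast; linear_combination 2 * ((n:ℤ) + m) * hss
          rw [e]; linarith
        · intro i hi
          rw [refl'_ne hi]; exact hyj i hi
      · intro j hj
        have h2 := hyj j hj
        have h3 := hx0c j
        rw [Pi.zero_apply, sub_zero] at h3
        rw [abs_le] at *
        push_cast at *
        constructor <;> linarith
  have hgz := gg_nonneg (D \ K) x0 z
  have hP0 : 0 ≤ PP (qlim D K) x0 := PP_nonneg (fun p => qlim_nonneg hd0 D K _)
  have hm0 : (0:ℝ) < m := by exact_mod_cast (by omega : 0 < m)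
  have hzp : 0 < (m:ℝ) ^ ((2:ℤ) - (d:ℤ)) := by positivity
  by_cases hbig : 8 * (d:ℝ) ≤ (m:ℝ)^2
  · have hKz : ∀ x ∈ K, (m:ℝ)^2 ≤ nsq (x - z') := by
      intro x hx
      have h1 := hK hx i0
      rw [Pi.zero_apply, sub_zero, abs_of_sgn hs, abs_le] at h1
      have h2 : (m:ℤ) ≤ |(x - z') i0| := by
        rw [abs_of_sgn hs, Pi.sub_apply, mul_sub, hz'0, le_abs]
        right; linarith [h1.2]
      have h3 : (m:ℝ) ≤ |((x - z') i0 : ℝ)| := by exact_mod_cast h2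
      have h4 : (m:ℝ)^2 ≤ |((x - z') i0 : ℝ)|^2 := by gcongr
      rw [sq_abs] at h4
      exact h4.trans (sq_le_nsq _ _)
    have key := core_large hd hbig hnz' hBD hKz hQ0 hQb (cube_finite z' (m/2)).toFinset (fun x hx => by
      rw [Set.Finite.mem_toFinset]
      intro i
      have h1 := (sq_le_nsq (x - z') i).trans hx.le
      have h2 : ((x - z') i : ℝ)^2 ≤ ((m:ℝ)/2)^2 := by linarith
      have h3 := abs_le_of_sq_le_sq h2 (by positivity)
      have h4 : 2 * |((x - z') i : ℝ)| ≤ m := by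
        linarith
      have h5 : 2 * |(x - z') i| ≤ (m:ℤ) := by exact_mod_cast h4
      rw [Pi.sub_apply] at h5
      omega)
    have hsum : ∑ y ∈ (cube_finite z' (m/2)).toFinset, gg (D \ K) x0 y ≤ (2 * (m:ℝ)) ^ d * (C * gg (D \ K) x0 z) := by
      have h1 : ∑ y ∈ (cube_finite z' (m/2)).toFinset, gg (D \ K) x0 y ≤ (cube_finite z' (m/2)).toFinset.card • (C * gg (D \ K) x0 z) := by
        refine Finset.sum_le_card_nsmul _ _ _ (fun y hy => ?_)
        rw [Set.Finite.mem_toFinset] at hy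
        have hy0 := hy i0
        rw [abs_of_sgn hs, mul_sub, hz'0, abs_le] at hy0
        have e2 : 2 * ((m/2:ℕ):ℤ) ≤ m := by omega
        refine Hg y z (by linarith) (by linarith) ?_ hz1 hz2 hzi
        intro i hi
        have := hy i
        rw [hz'i i hi] at this
        linarith
      refine h1.trans ?_
      rw [cube_card, nsmul_eq_mul]
      refine mul_le_mul_of_nonneg_right ?_ (by positivity)
      push_cast
      have : (2 * ((m/2:ℕ):ℝ) + 1) ≤ 2 * (m:ℝ) := by
        have : 2 * (m/2) + 1 ≤ 2 * m := by omega
        exact_mod_cast this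
      gcongr
    have k2 : ψ * PP (qlim D K) x0 ≤ Q * (4 * d / (m:ℝ)^2) * ((2 * (m:ℝ)) ^ d * (C * gg (D \ K) x0 z)) :=
      key.trans (mul_le_mul_of_nonneg_left hsum (by positivity))
    have e3 : (m:ℝ) ^ ((2:ℤ) - (d:ℤ)) = (m:ℝ)^2 / (m:ℝ)^d := by
      rw [zpow_sub₀ hm0.ne']; norm_cast
    have k3 : (m:ℝ) ^ ((2:ℤ) - (d:ℤ)) * PP (qlim D K) x0 ≤ E1 * (gg (D \ K) x0 z * qlim D K z) := by
      have k4 : PP (qlim D K) x0 ≤ (Q * (4 * d / (m:ℝ)^2) * ((2 * (m:ℝ)) ^ d * (C * gg (D \ K) x0 z))) / ψ := by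
        rw [le_div_iff₀ hψ0]; linarith
      refine (mul_le_mul_of_nonneg_left k4 hzp.le).trans (le_of_eq ?_)
      rw [e3, hE1, hQ, mul_pow]
      field_simp
    have k5 : min (1/E1) (1/E2) * (m:ℝ) ^ ((2:ℤ) - (d:ℤ)) * PP (qlim D K) x0 ≤ 1/E1 * ((m:ℝ) ^ ((2:ℤ) - (d:ℤ)) * PP (qlim D K) x0) := by
      rw [mul_assoc]
      exact mul_le_mul_of_nonneg_right (min_le_left _ _) (by positivity)
    refine k5.trans ?_
    rw [one_div_mul_eq_div, div_le_iff₀ hE1p]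
    linarith
  · push Not at hbig
    have hm8 : m ≤ 8 * d := by
      have h1 : ((m * m : ℕ):ℝ) < ((8 * d : ℕ) : ℝ) := by push_cast; linarith
      have h2 : m * m < 8 * d := by exact_mod_cast h1
      nlinarith
    have hPQ : PP (qlim D K) x0 ≤ Q := PP_le_const hd0 (fun p => hQb x0 (by rw [hnz']; nlinarith) p)
    have hgz' : ((1:ℝ) / (2 * d)) ^ (8 * d) ≤ gg (D \ K) x0 z' := by
      have h1 := aa_line hd0 (U := D \ K) (x0 := x0) (p := sdir i0 s) m (fun j hj1 hj2 => by
        rw [stp_sdir i0 hs]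
        have e : s * (x0 + (j:ℤ) • Pi.single i0 s : V d) i0 = n + j := by
          rw [Pi.add_apply, Pi.smul_apply, Pi.single_eq_same, smul_eq_mul]
          linear_combination hx0 + (j:ℤ) * hss
        refine hU _ (fun i => ?_) (by rw [e]; omega)
        rw [Pi.zero_apply, sub_zero]
        by_cases hi : i = i0
        · subst hi
          rw [abs_of_sgn hs, e, abs_le]
          push_cast
          constructor <;> omega
        · rw [Pi.add_apply, Pi.smul_apply, Pi.single_eq_of_ne hi, smul_zero, add_zero]
          have := hx0c i
          rw [Pi.zero_apply, sub_zero] at this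
          refine this.trans ?_
          push_cast; omega)
      rw [stp_sdir i0 hs] at h1
      have h2 : aa (D \ K) x0 m z' ≤ gg (D \ K) x0 z' := (aa_summable hd (D \ K) x0 z').le_tsum m (fun t _ => aa_nonneg _ _ _ _)
      have h3 : ((1:ℝ) / (2 * d)) ^ (8 * d) ≤ ((1:ℝ) / (2 * d)) ^ m := by
        refine pow_le_pow_of_le_one (by positivity) ?_ hm8
        rw [div_le_one (by positivity)]; linarith
      exact h3.trans (h1.trans h2)
    have h1 : 1 ≤ (2 * (d:ℝ)) ^ (8 * d) * (C * gg (D \ K) x0 z) := by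
      have h2 := hgz'.trans hz'g
      rw [one_div, inv_pow, inv_le_iff_one_le_mul₀ (by positivity)] at h2
      linarith
    have hzle : (m:ℝ) ^ ((2:ℤ) - (d:ℤ)) ≤ 1 := by
      refine zpow_le_one_of_nonpos₀ ?_ (by omega)
      exact_mod_cast (by omega : 1 ≤ m)
    have k3 : (m:ℝ) ^ ((2:ℤ) - (d:ℤ)) * PP (qlim D K) x0 ≤ E2 * (gg (D \ K) x0 z * qlim D K z) := by
      have : (m:ℝ) ^ ((2:ℤ) - (d:ℤ)) * PP (qlim D K) x0 ≤ 1 * Q := mul_le_mul hzle hPQ hP0 (by norm_num)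
      have h3 : 1 * Q ≤ ((2 * (d:ℝ)) ^ (8 * d) * (C * gg (D \ K) x0 z)) * Q := mul_le_mul_of_nonneg_right h1 hQ0
      refine (this.trans h3).trans (le_of_eq ?_)
      rw [hE2, hQ]; ring
    have k5 : min (1/E1) (1/E2) * (m:ℝ) ^ ((2:ℤ) - (d:ℤ)) * PP (qlim D K) x0 ≤ 1/E2 * ((m:ℝ) ^ ((2:ℤ) - (d:ℤ)) * PP (qlim D K) x0) := by
      rw [mul_assoc]
      exact mul_le_mul_of_nonneg_right (min_le_right _ _) (by positivity)
    refine k5.trans ?_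
    rw [one_div_mul_eq_div, div_le_iff₀ hE2p]
    linarith

lemma PPq_pos (hd : 3 ≤ d) {N n m : ℕ} {D K : Set (V d)} {x0 : V d} {i0 : Fin d} {s : ℤ} (hs : s = 1 ∨ s = -1) (hn : 16 ≤ n) (hN : n + m ≤ N)
    (hD : cube 0 (4*N) ⊆ D) (hK : K ⊆ cube 0 n) (hx0 : s * x0 i0 = n) : 0 < PP (qlim D K) x0 := by
  have hd0 : 0 < d := by omega
  have h1 := PP_ge_single (f := qlim D K) (x := x0) hd0 (fun p => qlim_nonneg hd0 D K _) (sdir i0 s)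
  have hss : s * s = 1 := by rcases hs with rfl | rfl <;> rfl
  have h2 : 0 < qlim D K (x0 + stp (sdir i0 s)) := by
    refine qlim_pos hd (by omega : 16 ≤ N) hD hK (by omega) i0 hs (2*N) _ ?_ ?_
    all_goals
      rw [stp_sdir i0 hs, Pi.add_apply, Pi.single_eq_same, mul_add, hx0, hss]
      push_cast
      omega
  have h3 : (0:ℝ) < 2 * d := by positivity
  by_contra hc
  push Not at hc
  have := mul_nonpos_of_nonneg_of_nonpos h3.le hc
  linarith

lemma stp_inj {p p' : Fin d × Bool} (h : stp p = stp p') : p = p' := by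
  obtain ⟨i, b⟩ := p
  obtain ⟨i', b'⟩ := p'
  have h1 := congrFun h i
  have h2 := congrFun h i'
  by_cases hi : i = i'
  · subst hi
    cases b <;> cases b' <;> simp [stp] at h1 ⊢
  · exfalso
    cases b <;> cases b' <;> simp [stp, Pi.single_apply, hi] at h1

lemma adj_stp (x : V d) (p : Fin d × Bool) : adj x (x + stp p) := by
  unfold adj
  rw [Finset.sum_eq_single p.1]
  · obtain ⟨i, b⟩ := p
    cases b <;> simp [stp]
  · intro i _ hi
    obtain ⟨i', b⟩ := p
    have hi' : i ≠ i' := hi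
    cases b <;> simp [stp, Pi.single_apply, hi']
  · simp

/-- `E` depends only on the first `t+1` positions. -/
def Dep (t : ℕ) (E : Set (ℕ → V d)) : Prop := ∀ ω ω' : ℕ → V d, (∀ i ≤ t, ω i = ω' i) → ω ∈ E → ω' ∈ E

def pre (t : ℕ) (ω : ℕ → V d) : Fin (t+1) → V d := fun i => ω i

def ext (t : ℕ) (g : Fin (t+1) → V d) : ℕ → V d := fun i => if h : i < t + 1 then g ⟨i, h⟩ else 0

lemma pre_meas (t : ℕ) : Measurable (pre (d := d) t) := by
  unfold pre
  fun_prop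

lemma ext_pre (t : ℕ) (ω : ℕ → V d) {i : ℕ} (hi : i ≤ t) : ext t (pre t ω) i = ω i := by
  unfold ext pre
  rw [dif_pos (by omega)]

lemma pre_ext (t : ℕ) (g : Fin (t+1) → V d) : pre t (ext t g) = g := by
  funext i
  exact dif_pos i.2

lemma Dep.eq_pre {t : ℕ} {E : Set (ℕ → V d)} (h : Dep t E) : E = pre t ⁻¹' {g | ext t g ∈ E} := by
  ext ω
  simp only [Set.mem_preimage, Set.mem_ofPred_eq]
  constructor
  · intro hω; exact h ω _ (fun i hi => (ext_pre t ω hi).symm) hω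
  · intro hω; exact h _ ω (fun i hi => ext_pre t ω hi) hω

lemma Dep.meas {t : ℕ} {E : Set (ℕ → V d)} (h : Dep t E) : MeasurableSet E := by
  rw [h.eq_pre]
  exact pre_meas t (MeasurableSet.of_discrete)

lemma Dep.mono {t t' : ℕ} (htt : t ≤ t') {E : Set (ℕ → V d)} (h : Dep t E) : Dep t' E :=
  fun ω ω' hω => h ω ω' (fun i hi => hω i (hi.trans htt))

lemma Dep.inter {t : ℕ} {E F : Set (ℕ → V d)} (h : Dep t E) (h' : Dep t F) : Dep t (E ∩ F) :=
  fun ω ω' hω hm => ⟨h ω ω' hω hm.1, h' ω ω' hω hm.2⟩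

lemma Dep.at (t : ℕ) (x : V d) : Dep t {ω | ω t = x} := by
  intro ω ω' h hm
  show ω' t = x
  rw [← h t le_rfl]; exact hm

lemma pre_single (t : ℕ) (g : Fin (t+1) → V d) : pre t ⁻¹' {g} = {ω | ∀ i ≤ t, ω i = ext t g i} := by
  ext ω
  simp only [Set.mem_preimage, Set.mem_singleton_iff, Set.mem_ofPred_eq]
  constructor
  · rintro rfl i hi; exact (ext_pre t ω hi).symm
  · intro h
    rw [← pre_ext t g]
    funext i
    exact h i (by omega)

def NN (x0 : V d) (t : ℕ) (ω : ℕ → V d) : Prop := ω 0 = x0 ∧ ∀ i < t, ∃ p, ω (i+1) = ω i + stp p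

lemma cyl_real (hd : 0 < d) {ν : Measure (ℕ → V d)} {x0 : V d} (hν : IsSRWLaw ν x0) {t : ℕ} {γ : ℕ → V d} (h : NN x0 t γ) :
    ν.real {ω | ∀ i ≤ t, ω i = γ i} = (1 / (2 * (d:ℝ))) ^ t := by
  rw [measureReal_def, hν.2 t γ h.1 (fun i hi => by obtain ⟨p, hp⟩ := h.2 i hi; rw [hp]; exact adj_stp _ _)]
  simp

/-- Key step for a single nearest-neighbour cylinder. -/
lemma cyl_step (hd : 0 < d) {ν : Measure (ℕ → V d)} {x0 : V d} (hν : IsSRWLaw ν x0) {t : ℕ} {γ : ℕ → V d} (h : NN x0 t γ) (p : Fin d × Bool) :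
    ν.real ({ω | ∀ i ≤ t, ω i = γ i} ∩ {ω | ω (t+1) = γ t + stp p}) = (1 / (2 * (d:ℝ))) * (1 / (2 * (d:ℝ))) ^ t := by
  set γ' : ℕ → V d := fun i => if i ≤ t then γ i else γ t + stp p with hγ'
  have e : ({ω | ∀ i ≤ t, ω i = γ i} ∩ {ω | ω (t+1) = γ t + stp p}) = {ω : ℕ → V d | ∀ i ≤ t + 1, ω i = γ' i} := by
    ext ω
    simp only [Set.mem_inter_iff, Set.mem_ofPred_eq]
    constructor
    · rintro ⟨h1, h2⟩ i hi
      by_cases hc : i ≤ t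
      · simp only [hγ', if_pos hc]; exact h1 i hc
      · have : i = t + 1 := by omega
        subst this
        simp only [hγ', if_neg hc]; exact h2
    · intro h1
      refine ⟨fun i hi => ?_, ?_⟩
      · have := h1 i (by omega)
        simpa only [hγ', if_pos hi] using this
      · have := h1 (t+1) le_rfl
        simpa only [hγ', if_neg (by omega : ¬ t + 1 ≤ t)] using this
  rw [e, cyl_real hd hν, pow_succ']
  refine ⟨?_, ?_⟩
  · simp only [hγ', if_pos (Nat.zero_le t)]; exact h.1
  · intro i hi
    by_cases hc : i + 1 ≤ t
    · simp only [hγ', if_pos hc, if_pos (by omega : i ≤ t)]; exact h.2 i (by omega)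
    · have : i = t := by omega
      subst this
      simp only [hγ', if_neg hc, if_pos le_rfl]; exact ⟨p, rfl⟩

lemma meas_at (t : ℕ) (x : V d) : MeasurableSet {ω : ℕ → V d | ω t = x} := (Dep.at t x).meas

lemma dep_cyl (t : ℕ) (γ : ℕ → V d) : Dep t {ω : ℕ → V d | ∀ i ≤ t, ω i = γ i} := by
  intro ω ω' h hm i hi
  rw [← h i hi]; exact hm i hi

lemma disj_steps (t : ℕ) (x : V d) : Pairwise (fun p p' : Fin d × Bool => Disjoint {ω : ℕ → V d | ω t = x + stp p} {ω : ℕ → V d | ω t = x + stp p'}) := by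
  intro p p' hne
  rw [Set.disjoint_left]
  intro ω h1 h2
  have h1' : ω t = x + stp p := h1
  have h2' : ω t = x + stp p' := h2
  rw [h1'] at h2'
  exact hne (stp_inj (add_left_cancel h2'))

lemma ae_nn_t (hd : 0 < d) {ν : Measure (ℕ → V d)} {x0 : V d} (hν : IsSRWLaw ν x0) (t : ℕ) : ∀ᵐ ω ∂ν, NN x0 t ω := by
  haveI := hν.1
  induction t with
  | zero =>
    have h1 := hν.2 0 (fun _ => x0) rfl (by simp)
    have h2 : ν {ω | ω 0 = x0} = 1 := by simpa using h1
    have h3 := (prob_compl_eq_zero_iff (meas_at 0 x0)).2 h2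
    rw [ae_iff]
    convert! h3 using 2
    ext ω
    simp [NN]
  | succ t ih =>
    have key : ∀ g : Fin (t+1) → V d, NN x0 t (ext t g) →
        ν ({ω | ∀ i ≤ t, ω i = ext t g i} ∩ {ω | ∀ p, ω (t+1) ≠ ext t g t + stp p}) = 0 := by
      intro g hg
      set Cy := {ω : ℕ → V d | ∀ i ≤ t, ω i = ext t g i} with hCy
      have hCm : MeasurableSet Cy := (dep_cyl t _).meas
      set W : Set (ℕ → V d) := ⋃ p : Fin d × Bool, Cy ∩ {ω | ω (t+1) = ext t g t + stp p} with hW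
      have hWm : MeasurableSet W := MeasurableSet.iUnion (fun p => hCm.inter (meas_at _ _))
      have h1 : ν.real W = ν.real Cy := by
        rw [hW, measureReal_iUnion_fintype (fun p p' hne => (disj_steps (t+1) (ext t g t) hne).mono Set.inter_subset_right Set.inter_subset_right)
          (fun p => hCm.inter (meas_at _ _))]
        simp only [hCy, cyl_step hd hν hg, cyl_real hd hν hg]
        simp
        field_simp
      have h2 : W ⊆ Cy := Set.iUnion_subset (fun p => Set.inter_subset_left)
      have h3 : ν (Cy \ W) = 0 := by
        have := measureReal_sdiff (μ := ν) h2 hWm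
        rw [h1, sub_self] at this
        exact (measureReal_eq_zero_iff).1 this
      refine measure_mono_null ?_ h3
      rintro ω ⟨h4, h5⟩
      refine ⟨h4, fun h6 => ?_⟩
      obtain ⟨p, hp⟩ := Set.mem_iUnion.1 h6
      exact h5 p hp.2
    have key2 : ∀ᵐ ω ∂ν, ∀ g : Fin (t+1) → V d, NN x0 t (ext t g) →
        ω ∉ ({ω | ∀ i ≤ t, ω i = ext t g i} ∩ {ω | ∀ p, ω (t+1) ≠ ext t g t + stp p}) := by
      rw [ae_all_iff]
      intro g
      by_cases hg : NN x0 t (ext t g)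
      · have := measure_eq_zero_iff_ae_notMem.1 (key g hg)
        filter_upwards [this] with ω hω _ using hω
      · exact Filter.Eventually.of_forall (fun ω h => absurd h hg)
    filter_upwards [ih, key2] with ω h1 h2
    refine ⟨h1.1, fun i hi => ?_⟩
    by_cases hc : i < t
    · exact h1.2 i hc
    · have : i = t := by omega
      subst this
      by_contra hcon
      push Not at hcon
      refine h2 (pre i ω) ⟨?_, ?_⟩ ⟨fun j hj => (ext_pre i ω hj).symm, fun p => ?_⟩
      · rw [ext_pre i ω (by omega)]; exact h1.1
      · intro j hj
        rw [ext_pre i ω (by omega), ext_pre i ω (by omega)]; exact h1.2 j hj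
      · rw [ext_pre i ω le_rfl]; exact hcon p

lemma ae_nn (hd : 0 < d) {ν : Measure (ℕ → V d)} {x0 : V d} (hν : IsSRWLaw ν x0) : ∀ᵐ ω ∂ν, ω 0 = x0 ∧ ∀ i, ∃ p, ω (i+1) = ω i + stp p := by
  have := ae_all_iff.2 (ae_nn_t hd hν)
  filter_upwards [this] with ω h
  exact ⟨(h 0).1, fun i => (h (i+1)).2 i (by omega)⟩

lemma markov (hd : 0 < d) {ν : Measure (ℕ → V d)} {x0 : V d} (hν : IsSRWLaw ν x0) {t : ℕ} {E : Set (ℕ → V d)} (hE : Dep t E) {x : V d}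
    (hx : ∀ ω ∈ E, ω t = x) (p : Fin d × Bool) : ν.real (E ∩ {ω | ω (t+1) = x + stp p}) = 1 / (2 * (d:ℝ)) * ν.real E := by
  haveI := hν.1
  set H := {ω : ℕ → V d | ω t = x} with hH
  set A := {ω : ℕ → V d | ω (t+1) = x + stp p} with hA
  have hc : (0:ℝ) ≤ 1 / (2 * (d:ℝ)) := by positivity
  have meq : (ν.restrict (H ∩ A)).map (pre t) = ENNReal.ofReal (1 / (2 * (d:ℝ))) • (ν.restrict H).map (pre t) := by
    rw [Measure.ext_iff_singleton]
    intro g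
    have hpm : MeasurableSet (pre (d := d) t ⁻¹' {g}) := pre_meas t (measurableSet_singleton _)
    rw [Measure.smul_apply, Measure.map_apply (pre_meas t) (measurableSet_singleton _), Measure.map_apply (pre_meas t) (measurableSet_singleton _),
      Measure.restrict_apply hpm, Measure.restrict_apply hpm, pre_single, smul_eq_mul]
    set Cy := {ω : ℕ → V d | ∀ i ≤ t, ω i = ext t g i} with hCy
    by_cases hg : NN x0 t (ext t g)
    · by_cases hgx : ext t g t = x
      · have e1 : Cy ∩ H = Cy := by
          refine Set.inter_eq_left.2 (fun ω hω => ?_)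
          show ω t = x
          rw [← hgx]; exact hω t le_rfl
        rw [← Set.inter_assoc, e1, ← ENNReal.ofReal_toReal (measure_ne_top ν (Cy ∩ A)), ← ENNReal.ofReal_toReal (measure_ne_top ν Cy),
          ← ENNReal.ofReal_mul hc]
        congr 1
        have h1 := cyl_step hd hν hg p
        have h2 := cyl_real hd hν hg
        rw [hgx] at h1
        rw [← h2] at h1
        exact h1
      · have e1 : Cy ∩ H = ∅ := by
          refine Set.eq_empty_of_forall_notMem (fun ω hω => ?_)
          have h1 : ω t = ext t g t := hω.1 t le_rfl
          exact hgx (h1.symm.trans hω.2)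
        rw [← Set.inter_assoc, e1]; simp
    · have h0 : ν Cy = 0 := by
        have := ae_nn_t hd hν t
        refine measure_mono_null ?_ (ae_iff.1 this)
        intro ω hω hn
        refine hg ⟨?_, ?_⟩
        · rw [← hω 0 (by omega)]; exact hn.1
        · intro i hi
          rw [← hω i (by omega), ← hω (i+1) (by omega)]; exact hn.2 i hi
      rw [measure_mono_null Set.inter_subset_left h0, measure_mono_null Set.inter_subset_left h0, mul_zero]
  have h1 := congrArg (fun μ => μ {g | ext t g ∈ E}) meq
  simp only [Measure.smul_apply, smul_eq_mul] at h1
  have hE' := hE.meas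
  rw [Measure.map_apply (pre_meas t) MeasurableSet.of_discrete, Measure.map_apply (pre_meas t) MeasurableSet.of_discrete, ← hE.eq_pre,
    Measure.restrict_apply hE', Measure.restrict_apply hE', ← Set.inter_assoc, Set.inter_eq_left.2 (show E ⊆ H from hx)] at h1
  rw [measureReal_def, h1, ENNReal.toReal_mul, ENNReal.toReal_ofReal hc]; rfl

lemma split_next (hd : 0 < d) {ν : Measure (ℕ → V d)} {x0 : V d} (hν : IsSRWLaw ν x0) {t : ℕ} {E A : Set (ℕ → V d)} (hE : MeasurableSet E)
    (hA : MeasurableSet A) {x : V d} (hx : ∀ ω ∈ E, ω t = x) :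
    ν.real (E ∩ A) = ∑ p : Fin d × Bool, ν.real (E ∩ {ω | ω (t+1) = x + stp p} ∩ A) := by
  haveI := hν.1
  rw [← measureReal_iUnion_fintype]
  · refine measureReal_congr ?_
    filter_upwards [ae_nn hd hν] with ω hω
    apply propext
    constructor
    · rintro ⟨h1, h2⟩
      obtain ⟨p, hp⟩ := hω.2 t
      rw [hx ω h1] at hp
      exact Set.mem_iUnion.2 ⟨p, ⟨h1, hp⟩, h2⟩
    · intro h
      obtain ⟨p, hp⟩ := Set.mem_iUnion.1 h
      exact ⟨hp.1.1, hp.2⟩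
  · intro p p' hne
    exact (disj_steps (t+1) x hne).mono (fun ω h => h.1.2) (fun ω h => h.1.2)
  · intro p
    exact (hE.inter (meas_at _ _)).inter hA

def EE (U : Set (V d)) (t : ℕ) (y : V d) : Set (ℕ → V d) := {ω | ω t = y ∧ ∀ i, 1 ≤ i → i ≤ t → ω i ∈ U}

lemma EE_dep (U : Set (V d)) (t : ℕ) (y : V d) : Dep t (EE U t y) := by
  intro ω ω' h hm
  refine ⟨by rw [← h t le_rfl]; exact hm.1, fun i h1 h2 => ?_⟩
  rw [← h i h2]; exact hm.2 i h1 h2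

lemma law_aa (hd : 0 < d) {ν : Measure (ℕ → V d)} {x0 : V d} (hν : IsSRWLaw ν x0) (U : Set (V d)) (t : ℕ) :
    ∀ y, ν.real (EE U t y) = aa U x0 t y := by
  haveI := hν.1
  induction t with
  | zero =>
    intro y
    rw [aa_zero]
    have h0 := ae_nn hd hν
    by_cases hy : y = x0
    · rw [if_pos hy]
      have : EE U 0 y =ᵐ[ν] (Set.univ : Set (ℕ → V d)) := by
        filter_upwards [h0] with ω hω
        apply propext
        constructor
        · intro _; trivial
        · intro _; exact ⟨by rw [hy]; exact hω.1, fun i h1 h2 => by omega⟩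
      rw [measureReal_congr this]; simp
    · rw [if_neg hy]
      have : EE U 0 y =ᵐ[ν] (∅ : Set (ℕ → V d)) := by
        filter_upwards [h0] with ω hω
        apply propext
        constructor
        · intro h; exact hy (h.1.symm.trans hω.1)
        · intro h; exact absurd h (Set.notMem_empty ω)
      rw [measureReal_congr this]; simp
  | succ t ih =>
    intro y
    rw [aa_succ]
    by_cases hy : y ∈ U
    · rw [if_pos hy]
      have e : EE U (t+1) y =ᵐ[ν] ⋃ p : Fin d × Bool, (EE U t (y + stp p) ∩ {ω | ω (t+1) = y}) := by
        filter_upwards [ae_nn hd hν] with ω hω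
        apply propext
        constructor
        · intro h
          obtain ⟨p, hp⟩ := hω.2 t
          refine Set.mem_iUnion.2 ⟨(p.1, !p.2), ⟨?_, fun i h1 h2 => h.2 i h1 (by omega)⟩, h.1⟩
          rw [stp_neg, ← h.1, hp]; abel
        · intro h
          obtain ⟨p, hp1, hp2⟩ := Set.mem_iUnion.1 h
          refine ⟨hp2, fun i h1 h2 => ?_⟩
          by_cases hc : i ≤ t
          · exact hp1.2 i h1 hc
          · have : i = t + 1 := by omega
            rw [this, show ω (t+1) = y from hp2]; exact hy
      rw [measureReal_congr e, measureReal_iUnion_fintype]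
      · unfold PP
        rw [Finset.sum_div]
        refine Finset.sum_congr rfl (fun p _ => ?_)
        have h1 := markov hd hν (EE_dep U t (y + stp p)) (fun ω h => h.1) (p.1, !p.2)
        rw [stp_neg, add_neg_cancel_right, ih] at h1
        rw [h1]; ring
      · intro p p' hne
        exact (disj_steps t y hne).mono (fun ω h => h.1.1) (fun ω h => h.1.1)
      · intro p
        exact (EE_dep U t _).meas.inter (meas_at _ _)
    · rw [if_neg hy]
      have : EE U (t+1) y = ∅ := by
        refine Set.eq_empty_of_forall_notMem (fun ω h => hy ?_)
        rw [← h.1]; exact h.2 (t+1) (by omega) le_rfl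
      rw [this]; simp

def Av (D K : Set (V d)) (t T : ℕ) : Set (ℕ → V d) := {ω | ∀ j, t ≤ j → j ≤ t + T → (∀ i, t ≤ i → i < j → ω i ∈ D) → ω j ∉ K}

lemma Av_dep (D K : Set (V d)) (t T : ℕ) : Dep (t + T) (Av D K t T) := by
  intro ω ω' h hm j h1 h2 h3
  rw [← h j h2]
  refine hm j h1 h2 (fun i h4 h5 => ?_)
  rw [h i (by omega)]; exact h3 i h4 h5

lemma law_qq (hd : 0 < d) {ν : Measure (ℕ → V d)} {x0 : V d} (hν : IsSRWLaw ν x0) (D K : Set (V d)) (T : ℕ) :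
    ∀ (t : ℕ) (E : Set (ℕ → V d)) (x : V d), Dep t E → (∀ ω ∈ E, ω t = x) → ν.real (E ∩ Av D K t T) = qq D K T x * ν.real E := by
  haveI := hν.1
  induction T with
  | zero =>
    intro t E x hE hx
    by_cases hK : x ∈ K
    · have : E ∩ Av D K t 0 = ∅ := by
        refine Set.eq_empty_of_forall_notMem (fun ω h => ?_)
        refine h.2 t le_rfl le_rfl (fun i h1 h2 => by omega) ?_
        rw [hx ω h.1]; exact hK
      rw [this]; simp [qq, hK]
    · have : E ∩ Av D K t 0 = E := by
        refine Set.inter_eq_left.2 (fun ω h j h1 h2 _ => ?_)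
        have : j = t := by omega
        rw [this, hx ω h]; exact hK
      rw [this]; simp [qq, hK]
  | succ T ih =>
    intro t E x hE hx
    by_cases hK : x ∈ K
    · have : E ∩ Av D K t (T+1) = ∅ := by
        refine Set.eq_empty_of_forall_notMem (fun ω h => ?_)
        refine h.2 t le_rfl (by omega) (fun i h1 h2 => by omega) ?_
        rw [hx ω h.1]; exact hK
      rw [this]; simp [qq, hK]
    · by_cases hD : x ∈ D
      · have e : E ∩ Av D K t (T+1) = E ∩ Av D K (t+1) T := by
          ext ω
          simp only [Set.mem_inter_iff, and_congr_right_iff]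
          intro hω
          constructor
          · intro h j h1 h2 h3
            refine h j (by omega) (by omega) (fun i h4 h5 => ?_)
            by_cases hc : i = t
            · rw [hc, hx ω hω]; exact hD
            · exact h3 i (by omega) h5
          · intro h j h1 h2 h3
            by_cases hc : j = t
            · rw [hc, hx ω hω]; exact hK
            · exact h j (by omega) (by omega) (fun i h4 h5 => h3 i (by omega) h5)
        rw [e, split_next hd hν hE.meas (Av_dep D K (t+1) T).meas hx]
        have e2 : qq D K (T+1) x = PP (qq D K T) x := by simp [qq, hK, hD]
        rw [e2, PP, div_mul_eq_mul_div, Finset.sum_mul, Finset.sum_div]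
        refine Finset.sum_congr rfl (fun p _ => ?_)
        rw [ih (t+1) (E ∩ {ω | ω (t+1) = x + stp p}) (x + stp p) ((hE.mono (by omega)).inter (Dep.at _ _)) (fun ω h => h.2), markov hd hν hE hx p]
        ring
      · have : E ∩ Av D K t (T+1) = E := by
          refine Set.inter_eq_left.2 (fun ω h j h1 h2 h3 => ?_)
          by_cases hc : j = t
          · rw [hc, hx ω h]; exact hK
          · exfalso
            have := h3 t le_rfl (by omega)
            rw [hx ω h] at this
            exact hD this
        rw [this]; simp [qq, hK, hD]

def AvI (D K : Set (V d)) (t : ℕ) : Set (ℕ → V d) := {ω | ∀ j, t ≤ j → (∀ i, t ≤ i → i < j → ω i ∈ D) → ω j ∉ K}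

lemma AvI_eq (D K : Set (V d)) (t : ℕ) : AvI D K t = ⋂ T, Av D K t T := by
  ext ω
  simp only [Set.mem_iInter]
  constructor
  · intro h T j h1 _ h3; exact h j h1 h3
  · intro h j h1 h3; exact h j j h1 (by omega) h3

lemma AvI_meas (D K : Set (V d)) (t : ℕ) : MeasurableSet (AvI D K t) := by
  rw [AvI_eq]; exact MeasurableSet.iInter (fun T => (Av_dep D K t T).meas)

lemma law_qlim (hd : 0 < d) {ν : Measure (ℕ → V d)} {x0 : V d} (hν : IsSRWLaw ν x0) (D K : Set (V d))
    {t : ℕ} {E : Set (ℕ → V d)} {x : V d} (hE : Dep t E) (hx : ∀ ω ∈ E, ω t = x) : ν.real (E ∩ AvI D K t) = qlim D K x * ν.real E := by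
  haveI := hν.1
  have h1 : Filter.Tendsto (ν ∘ fun T => E ∩ Av D K t T) Filter.atTop (nhds (ν (⋂ T, E ∩ Av D K t T))) := by
    refine tendsto_measure_iInter_atTop (fun T => (hE.meas.inter (Av_dep D K t T).meas).nullMeasurableSet) ?_ ⟨0, measure_ne_top _ _⟩
    intro T T' hT ω h
    exact ⟨h.1, fun j h1 h2 h3 => h.2 j h1 (by omega) h3⟩
  rw [← Set.inter_iInter, ← AvI_eq] at h1
  have h2 := (ENNReal.tendsto_toReal (measure_ne_top ν (E ∩ AvI D K t))).comp h1
  have h3 : Filter.Tendsto (fun T => qq D K T x * ν.real E) Filter.atTop (nhds (qlim D K x * ν.real E)) :=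
    (qq_tendsto hd D K x).mul_const _
  refine tendsto_nhds_unique h2 (h3.congr (fun T => ?_))
  exact (law_qq hd hν D K T t E x hE hx).symm

lemma le_exit_iff (D : Set (V d)) (ω : ℕ → V d) (j : ℕ) : (j : ENat) ≤ exitTimeE D ω ↔ ∀ i < j, ω i ∈ D := by
  unfold exitTimeE
  split
  · rename_i h
    rw [Nat.cast_le, Nat.le_find_iff]
    simp
  · rename_i h
    push Not at h
    simp [h]

lemma lt_exit_iff (D : Set (V d)) (ω : ℕ → V d) (j : ℕ) : (j : ENat) < exitTimeE D ω ↔ ∀ i ≤ j, ω i ∈ D := by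
  unfold exitTimeE
  split
  · rename_i h
    rw [Nat.cast_lt, Nat.lt_find_iff]
    simp
  · rename_i h
    push Not at h
    simp [h]

lemma law_avoid (hd : 0 < d) {ν : Measure (ℕ → V d)} {x0 : V d} (hν : IsSRWLaw ν x0) {D K : Set (V d)} (hx0 : x0 ∈ D) :
    ν.real {ω | avoidBeforeExitPos D K ω} = PP (qlim D K) x0 := by
  haveI := hν.1
  set E : Set (ℕ → V d) := {ω | ω 0 = x0} with hE
  have hE1 : ν.real E = 1 := by
    have := law_aa hd hν Set.univ 0 x0
    rw [aa_zero, if_pos rfl] at this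
    rw [← this]
    congr 1
    ext ω
    simp [EE, hE]
  have e : {ω | avoidBeforeExitPos D K ω} =ᵐ[ν] (E ∩ AvI D K 1 : Set (ℕ → V d)) := by
    filter_upwards [ae_nn hd hν] with ω hω
    apply propext
    constructor
    · intro h
      refine ⟨hω.1, fun j h1 h2 => h j h1 ((le_exit_iff D ω j).2 (fun i hi => ?_))⟩
      by_cases hc : i = 0
      · rw [hc, hω.1]; exact hx0
      · exact h2 i (by omega) hi
    · intro h j h1 h2
      exact h.2 j h1 (fun i _ h4 => (le_exit_iff D ω j).1 h2 i h4)
  rw [measureReal_congr e, split_next hd hν (meas_at 0 x0) (AvI_meas D K 1) (fun ω h => h), PP, Finset.sum_div]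
  refine Finset.sum_congr rfl (fun p _ => ?_)
  rw [law_qlim hd hν D K (t := 0 + 1) (x := x0 + stp p) (((Dep.at 0 x0).mono (by omega)).inter (Dep.at _ _)) (fun ω h => h.2),
    markov hd hν (Dep.at 0 x0) (fun ω h => h) p]
  have : ν.real {ω | ω 0 = x0} = 1 := hE1
  rw [this]; ring

def VV (D : Set (V d)) (z : V d) (t : ℕ) : Set (ℕ → V d) := {ω | (t : ENat) < exitTimeE D ω ∧ ω t = z}

lemma VV_dep (D : Set (V d)) (z : V d) (t : ℕ) : Dep t (VV D z t) := by
  intro ω ω' h hm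
  refine ⟨(lt_exit_iff D ω' t).2 (fun i hi => ?_), by rw [← h t le_rfl]; exact hm.2⟩
  rw [← h i hi]; exact (lt_exit_iff D ω t).1 hm.1 i hi

lemma integral_eq (D : Set (V d)) (ν : Measure (ℕ → V d)) (s : Set (ℕ → V d)) (z : V d) :
    ∫⁻ ω, visitsBeforeExit D z ω ∂(ProbabilityTheory.cond ν s) = (ν s)⁻¹ * ∑' t, ν (VV D z t ∩ s) := by
  unfold ProbabilityTheory.cond visitsBeforeExit
  rw [lintegral_smul_measure, smul_eq_mul]
  congr 1
  have e : ∀ j : ℕ, (fun ω : ℕ → V d => if (j : ENat) < exitTimeE D ω ∧ ω j = z then (1:ℝ≥0∞) else 0) = (VV D z j).indicator 1 := by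
    intro j
    funext ω
    simp [VV, Set.indicator_apply]
  rw [lintegral_tsum]
  · refine tsum_congr (fun j => ?_)
    rw [e j, lintegral_indicator_one (VV_dep D z j).meas, Measure.restrict_apply (VV_dep D z j).meas]
  · intro j
    rw [e j]
    exact (measurable_one.indicator (VV_dep D z j).meas).aemeasurable

lemma visits_ge (hd : 3 ≤ d) {ν : Measure (ℕ → V d)} {x0 : V d} (hν : IsSRWLaw ν x0) {D K : Set (V d)} (hx0 : x0 ∈ D) (z : V d) :
    ENNReal.ofReal (gg (D \ K) x0 z * qlim D K z) ≤ ∑' t, ν (VV D z t ∩ {ω | avoidBeforeExitPos D K ω}) := by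
  haveI := hν.1
  have hd0 : 0 < d := by omega
  have h1 : ∀ t, ENNReal.ofReal (aa (D \ K) x0 t z * qlim D K z) ≤ ν (VV D z t ∩ {ω | avoidBeforeExitPos D K ω}) := by
    intro t
    have h2 := law_qlim hd0 hν D K (EE_dep (D \ K) t z) (fun ω h => h.1)
    rw [law_aa hd0 hν, mul_comm] at h2
    rw [← h2, measureReal_def, ENNReal.ofReal_toReal (measure_ne_top _ _)]
    refine measure_mono_ae ?_
    filter_upwards [ae_nn hd0 hν] with ω hω
    rintro ⟨h3, h4⟩
    have hD : ∀ i ≤ t, ω i ∈ D := by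
      intro i hi
      by_cases hc : i = 0
      · rw [hc, hω.1]; exact hx0
      · exact (h3.2 i (by omega) hi).1
    refine ⟨⟨(lt_exit_iff D ω t).2 hD, h3.1⟩, fun j h5 h6 => ?_⟩
    rw [le_exit_iff] at h6
    by_cases hc : j ≤ t
    · exact (h3.2 j h5 hc).2
    · exact h4 j (by omega) (fun i _ h8 => h6 i h8)
  refine le_trans ?_ (ENNReal.tsum_le_tsum h1)
  have hs := aa_summable hd (D \ K) x0 z
  have hq := qlim_nonneg hd0 D K z
  rw [← ENNReal.ofReal_tsum_of_nonneg (fun t => mul_nonneg (aa_nonneg _ _ _ _) hq) (hs.mul_right _), tsum_mul_right]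
  exact le_rfl

lemma final_ge (hd : 3 ≤ d) {ν : Measure (ℕ → V d)} {x0 : V d} (hν : IsSRWLaw ν x0) {D K : Set (V d)} (hx0 : x0 ∈ D) (z : V d) {b : ℝ}
    (hp : 0 < PP (qlim D K) x0) (hb : b * PP (qlim D K) x0 ≤ gg (D \ K) x0 z * qlim D K z) :
    ENNReal.ofReal b ≤ ∫⁻ ω, visitsBeforeExit D z ω ∂(ProbabilityTheory.cond ν {ω | avoidBeforeExitPos D K ω}) := by
  haveI := hν.1
  rw [integral_eq]
  have h1 : ν {ω | avoidBeforeExitPos D K ω} = ENNReal.ofReal (PP (qlim D K) x0) := by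
    rw [← law_avoid (by omega) hν hx0, measureReal_def, ENNReal.ofReal_toReal (measure_ne_top _ _)]
  rw [h1, ← ENNReal.ofReal_inv_of_pos hp]
  refine le_trans ?_ (mul_le_mul_right (visits_ge hd hν hx0 z) _)
  rw [← ENNReal.ofReal_mul (by positivity)]
  refine ENNReal.ofReal_le_ofReal ?_
  rw [inv_mul_eq_div, le_div_iff₀ hp]
  exact hb

lemma final_one (hd : 3 ≤ d) {ν : Measure (ℕ → V d)} {x0 : V d} (hν : IsSRWLaw ν x0) {D K : Set (V d)} (hx0 : x0 ∈ D) 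
    (hp : 0 < PP (qlim D K) x0) :
    1 ≤ ∫⁻ ω, visitsBeforeExit D x0 ω ∂(ProbabilityTheory.cond ν {ω | avoidBeforeExitPos D K ω}) := by
  haveI := hν.1
  rw [integral_eq]
  have h1 : ν {ω | avoidBeforeExitPos D K ω} = ENNReal.ofReal (PP (qlim D K) x0) := by
    rw [← law_avoid (by omega) hν hx0, measureReal_def, ENNReal.ofReal_toReal (measure_ne_top _ _)]
  have h2 : ν {ω | avoidBeforeExitPos D K ω} ≤ ∑' t, ν (VV D x0 t ∩ {ω | avoidBeforeExitPos D K ω}) := by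
    refine le_trans ?_ (ENNReal.le_tsum 0)
    refine measure_mono_ae ?_
    filter_upwards [ae_nn (by omega) hν] with ω hω
    intro h
    refine ⟨⟨(lt_exit_iff D ω 0).2 (fun i hi => ?_), hω.1⟩, h⟩
    have : i = 0 := by omega
    rw [this, hω.1]; exact hx0
  refine le_trans ?_ (mul_le_mul_right h2 _)
  rw [ENNReal.inv_mul_cancel]
  · rw [h1]; simpa using hp
  · exact measure_ne_top _ _

lemma ae_transient (hd : 3 ≤ d) {μ : Measure (ℕ → V d)} {x0 : V d} (hμ : IsSRWLaw μ x0) : ∀ᵐ ω ∂μ, ∀ v, {t | ω t = v}.Finite := by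
  haveI := hμ.1
  rw [ae_all_iff]
  intro v
  have h1 : ∀ t, μ {ω | ω t = v} = ENNReal.ofReal (aa Set.univ x0 t v) := by
    intro t
    rw [← law_aa (by omega) hμ, measureReal_def, ENNReal.ofReal_toReal (measure_ne_top _ _)]
    congr 1
    ext ω
    simp [EE]
  have h2 : ∑' t, μ {ω | ω t = v} ≠ ∞ := by
    simp only [h1]
    rw [← ENNReal.ofReal_tsum_of_nonneg (fun t => aa_nonneg _ _ _ _) (aa_summable hd Set.univ x0 v)]
    exact ENNReal.ofReal_ne_top
  exact ae_finite_setOf_mem h2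

lemma stop_cases (D : Set (V d)) (ω : ℕ → V d) (t : ℕ) : stopAt D ω t = ω t ∨ (stopAt D ω t ∉ D) := by
  unfold stopAt
  split
  · left; rfl
  · rename_i h
    right
    unfold exitTime exitTimeE at *
    split at h
    · rename_i h'
      rw [dif_pos h']
      exact Nat.find_spec h'
    · exact absurd le_top h

lemma stop_step {D : Set (V d)} {ω : ℕ → V d} (hω : ∀ i, ∃ p, ω (i+1) = ω i + stp p) (t : ℕ) :
    stopAt D ω (t+1) = stopAt D ω t ∨ ∃ p, stopAt D ω (t+1) = stopAt D ω t + stp p := by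
  unfold stopAt
  by_cases h1 : ((t+1 : ℕ) : ENat) ≤ exitTimeE D ω
  · have h2 : (t : ENat) ≤ exitTimeE D ω := le_trans (by exact_mod_cast Nat.le_succ t) h1
    rw [if_pos h1, if_pos h2]
    right; exact hω t
  · rw [if_neg h1]
    left
    split
    · rename_i h2
      have h3 : exitTime D ω = t := by
        unfold exitTime
        unfold exitTimeE at *
        split at h1
        · rename_i h'
          rw [dif_pos h'] at h2 ⊢
          rw [Nat.cast_le] at h1 h2
          rw [ENat.toNat_coe]; omega
        · exact absurd le_top h1
      rw [h3]
    · rfl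

lemma lastVisit_spec {σ : ℕ → V d} {t : ℕ} (h : {j | σ j = σ t}.Finite) : t ≤ lastVisit σ t ∧ σ (lastVisit σ t) = σ t := by
  unfold lastVisit
  have hf : {j | t ≤ j ∧ σ j = σ t}.Finite := h.subset (fun j hj => hj.2)
  exact Nat.sSup_mem (s := {j | t ≤ j ∧ σ j = σ t}) ⟨t, le_rfl, rfl⟩ hf.bddAbove

lemma lastVisit_cases (σ : ℕ → V d) (t : ℕ) : σ (lastVisit σ t) = σ t ∨ lastVisit σ t = 0 := by
  by_cases h : BddAbove {j | t ≤ j ∧ σ j = σ t}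
  · left; exact (Nat.sSup_mem (s := {j | t ≤ j ∧ σ j = σ t}) ⟨t, le_rfl, rfl⟩ h).2
  · right
    unfold lastVisit
    exact Nat.sSup_of_not_bddAbove h

lemma alpha_facts {D : Set (V d)} {n : ℕ} (hD : cube 0 n ⊆ D) {ω : ℕ → V d} (h0 : ω 0 = 0) (hω : ∀ i, ∃ p, ω (i+1) = ω i + stp p)
    (hfin : ∀ v, {t | ω t = v}.Finite) :
    endPt (alphaList D n ω) ∈ innerBdry (cube 0 n) ∧ endPt (alphaList D n ω) ∈ alphaList D n ω ∧ ∀ v ∈ alphaList D n ω, v ∈ cube 0 n := by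
  set σ := stopAt D ω with hσ
  set γ := lerw D ω with hγ
  have hγk : ∀ k, γ k = σ (leTime σ k) := fun k => rfl
  have σ0 : σ 0 = 0 := by
    rw [hσ, ← h0]
    unfold stopAt
    rw [if_pos (by simp)]
  have σfin : ∀ v ∈ D, {t | σ t = v}.Finite := by
    intro v hv
    refine (hfin v).subset (fun t ht => ?_)
    have ht' : σ t = v := ht
    rcases stop_cases D ω t with h | h
    · show ω t = v
      rw [← h]; exact ht'
    · exact absurd (by rw [← hσ, ht']; exact hv) h
  have c0 : (0 : V d) ∈ cube 0 n := mem_cube_self 0 n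
  have γ0 : γ 0 = 0 := by
    rw [hγk]
    have := (lastVisit_spec (σ := σ) (t := 0) (by rw [σ0]; exact σfin 0 (hD c0))).2
    rw [← σ0]; exact this
  have nxt : ∀ k, γ k ∈ cube 0 n → γ k ∉ innerBdry (cube 0 n) → σ (leTime σ k + 1) ∈ cube 0 n := by
    intro k h1 h2
    rcases stop_step (D := D) hω (leTime σ k) with h | ⟨p, h⟩
    · rw [← hσ] at h
      rw [h]; exact h1
    · rw [← hσ] at h
      rw [h]
      by_contra hc
      exact h2 ⟨h1, _, adj_stp _ p, hc⟩
  have stepc : ∀ k, γ k ∈ cube 0 n → γ k ∉ innerBdry (cube 0 n) → γ (k+1) ∈ cube 0 n := by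
    intro k h1 h2
    have h3 := nxt k h1 h2
    rw [hγk]
    show σ (lastVisit σ (leTime σ k + 1)) ∈ cube 0 n
    rcases lastVisit_cases σ (leTime σ k + 1) with h | h
    · rw [h]; exact h3
    · rw [h, σ0]; exact c0
  have upto : ∀ k, (∀ j < k, γ j ∉ innerBdry (cube 0 n)) → ∀ j ≤ k, γ j ∈ cube 0 n := by
    intro k hk j
    induction j with
    | zero => intro _; rw [γ0]; exact c0
    | succ j ih => intro hj; exact stepc j (ih (by omega)) (hk j (by omega))
  have hit : ∃ j, γ j ∈ innerBdry (cube 0 n) := by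
    by_contra hno
    push Not at hno
    have hall : ∀ j, γ j ∈ cube 0 n := fun j => upto j (fun i _ => hno i) j le_rfl
    have hmono : StrictMono (leTime σ) := by
      refine strictMono_nat_of_lt_succ (fun k => ?_)
      have h3 := nxt k (hall k) (hno k)
      have := (lastVisit_spec (σ := σ) (t := leTime σ k + 1) (σfin _ (hD h3))).1
      show leTime σ k < lastVisit σ (leTime σ k + 1)
      omega
    have hf : {t | σ t ∈ cube 0 n}.Finite := by
      have : {t | σ t ∈ cube 0 n} = ⋃ v ∈ cube (0 : V d) n, {t | σ t = v} := by
        ext t; simp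
      rw [this]
      exact (cube_finite 0 n).biUnion (fun v hv => σfin v (hD hv))
    have hinf : (Set.range (leTime σ)).Infinite := Set.infinite_range_of_injective hmono.injective
    refine hinf (hf.subset ?_)
    rintro _ ⟨k, rfl⟩
    exact hall k
  have hidx : hitIdx (innerBdry (cube 0 n)) γ = Nat.find hit := by
    unfold hitIdx hitTimeE
    rw [dif_pos hit, ENat.toNat_coe]
  have hend : endPt (alphaList D n ω) = γ (Nat.find hit) := by
    unfold endPt alphaList
    rw [← hγ, hidx, List.range_succ]
    simp
  have hmem : ∀ v, v ∈ alphaList D n ω ↔ ∃ j ≤ Nat.find hit, γ j = v := by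
    intro v
    unfold alphaList
    rw [← hγ, hidx]
    simp [Nat.lt_succ_iff]
  refine ⟨?_, ?_, ?_⟩
  · rw [hend]; exact Nat.find_spec hit
  · rw [hend, hmem]; exact ⟨_, le_rfl, rfl⟩
  · intro v hv
    obtain ⟨j, hj, rfl⟩ := (hmem v).1 hv
    exact upto (Nat.find hit) (fun i hi => Nat.find_min hit hi) j hj

lemma bdry_face {n : ℕ} {x : V d} (h : x ∈ innerBdry (cube 0 n)) : ∃ i : Fin d, |x i| = (n:ℤ) := by
  obtain ⟨h1, y, h2, h3⟩ := h
  simp only [cube, Set.mem_ofPred_eq, not_forall, not_le, Pi.zero_apply, sub_zero] at h1 h3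
  obtain ⟨i, hi⟩ := h3
  refine ⟨i, ?_⟩
  have h4 := h1 i
  have h5 : |x i - y i| ≤ 1 := by
    have h2' : (∑ i, |x i - y i|) = 1 := h2
    rw [← h2']
    exact Finset.single_le_sum (f := fun i => |x i - y i|) (fun i _ => abs_nonneg _) (Finset.mem_univ i)
  have h6 : |y i| ≤ |x i| + |x i - y i| := by
    have := abs_sub_abs_le_abs_sub (y i) (x i)
    rw [abs_sub_comm] at this
    linarith
  omega

lemma faceDir_spec {n : ℕ} {x : V d} (h : ∃ i : Fin d, |x i| = (n:ℤ)) :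
    ∃ (i0 : Fin d) (s : ℤ), (s = 1 ∨ s = -1) ∧ s * x i0 = n ∧ faceDir x n = Pi.single i0 s := by
  have hs := Classical.choose_spec h
  refine ⟨Classical.choose h, if 0 ≤ x (Classical.choose h) then 1 else -1, ?_, ?_, ?_⟩
  · split <;> simp
  · refine Eq.trans ?_ hs
    split
    · rename_i hc; rw [abs_of_nonneg hc, one_mul]
    · rename_i hc; rw [abs_of_neg (not_le.1 hc)]; ring
  · unfold faceDir
    rw [dif_pos h]
    funext j
    rw [Pi.single_apply]

theorem main_thm :
    ∀ d : ℕ, 3 ≤ d → ∃ c : ℝ, 0 < c ∧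
      ∀ (N n m : ℕ) (D : Set (V d)),
        1 ≤ N → cube 0 (4 * N) ⊆ D → 16 ≤ n → n < n + m → n + m ≤ N → m ≤ n / 8 →
        ∀ μ : Measure (ℕ → V d), IsSRWLaw μ 0 →
        ∀ a : List (V d), μ { ω | alphaList D n ω = a } ≠ 0 →
        ∀ ν : Measure (ℕ → V d), IsSRWLaw ν (endPt a) →
        ∀ z ∈ boxA (endPt a) n m,
          ENNReal.ofReal (c * (m : ℝ) ^ ((2 : ℤ) - (d : ℤ))) ≤
            ∫⁻ ω, visitsBeforeExit D z ω
              ∂(ProbabilityTheory.cond ν { ω | avoidBeforeExitPos D { v | v ∈ a } ω }) := by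
  intro d hd
  obtain ⟨c, hc, H⟩ := core (d := d) hd
  refine ⟨min c 1, by positivity, ?_⟩
  intro N n m D _ hD hn hm hN hmn μ hμ a ha ν hν z hz
  have hd0 : 0 < d := by omega
  have hDn : cube (0 : V d) n ⊆ D := (cube_mono (by omega : n ≤ 4 * N)).trans hD
  obtain ⟨f1, f2, f3⟩ : endPt a ∈ innerBdry (cube 0 n) ∧ endPt a ∈ a ∧ ∀ v ∈ a, v ∈ cube 0 n := by
    by_contra hcon
    refine ha ?_
    rw [measure_eq_zero_iff_ae_notMem]
    filter_upwards [ae_nn hd0 hμ, ae_transient hd hμ] with ω h1 h2 h3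
    have h3' : alphaList D n ω = a := h3
    have := alpha_facts hDn h1.1 h1.2 h2
    rw [h3'] at this
    exact hcon this
  obtain ⟨i0, s, hs, hsx, hface⟩ := faceDir_spec (bdry_face f1)
  set x0 := endPt a with hx0
  set K : Set (V d) := {v | v ∈ a} with hK
  have hKn : K ⊆ cube 0 n := f3
  have hx0K : x0 ∈ K := f2
  have hx0D : x0 ∈ D := hDn (hKn hx0K)
  have hpos : 0 < PP (qlim D K) x0 := PPq_pos hd hs hn hN hD hKn hsx
  have hz' : z ∈ cube (x0 + ((m/2 : ℕ) : ℤ) • Pi.single i0 s) (m/4) := by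
    have := hz
    unfold boxA x1pt at this
    rw [hface] at this
    exact this
  by_cases hm2 : 2 ≤ m
  · refine final_ge hd hν hx0D z hpos ?_
    have h1 := H N n m D K x0 i0 s hs hm2 (by omega) hn hN hD hKn hx0K hsx z hz'
    refine le_trans ?_ h1
    have hm0 : (0:ℝ) < m := by exact_mod_cast (by omega : 0 < m)
    have : min c 1 ≤ c := min_le_left _ _
    gcongr
  · have : m = 1 := by omega
    subst this
    have hzx : z = x0 := by
      funext i
      have := hz' i
      simp only [Nat.reduceDiv, Nat.cast_zero, zero_smul, add_zero] at this
      have := abs_nonpos_iff.1 this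
      omega
    rw [hzx]
    refine le_trans ?_ (final_one hd hν hx0D hpos)
    rw [ENNReal.ofReal_le_one]
    simp

/-- Lemma 3.7.  Let `d ≥ 3`, and adopt the shell setup (`Q_{4N} ⊆ D`,
`16 ≤ n < n+m ≤ N`, `m ≤ n/8`, `α` the initial segment of the LERW up to the first
hit of `∂ᵢ Q_n`, with endpoint `x₀`, and `A` the box `Q(x₀ + (m/2)e₁, m/4)` suitably
rotated).  Let `X̃` be SRW from `x₀` conditioned on `{τ_D < T⁺_α}` and `G̃_D` its Green
function in `D`.  Then there is `c = c(d) > 0` with `G̃_D(x₀,z) ≥ c m^{2-d}` for all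
`z ∈ A`. -/
theorem conditioned_green_lower_bound :
    ∀ d : ℕ, 3 ≤ d → ∃ c : ℝ, 0 < c ∧
      ∀ (N n m : ℕ) (D : Set (V d)),
        1 ≤ N → cube 0 (4 * N) ⊆ D → 16 ≤ n → n < n + m → n + m ≤ N → m ≤ n / 8 →
        ∀ μ : Measure (ℕ → V d), IsSRWLaw μ 0 →
        ∀ a : List (V d), μ { ω | alphaList D n ω = a } ≠ 0 →
        ∀ ν : Measure (ℕ → V d), IsSRWLaw ν (endPt a) →
        ∀ z ∈ boxA (endPt a) n m,
          ENNReal.ofReal (c * (m : ℝ) ^ ((2 : ℤ) - (d : ℤ))) ≤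
            ∫⁻ ω, visitsBeforeExit D z ω
              ∂(ProbabilityTheory.cond ν { ω | avoidBeforeExitPos D { v | v ∈ a } ω }) := by
  exact main_thm

end USFPaper
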